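/- arXiv:1104.1994 — 3 statements merged into one kernel-verified Lean document; each statement's English description precedes it below -/
import Mathlib

section
/- Let F̂, Ĝ : ℂ × ℂ → ℂ, and set F(n,k) = cos(πn)·F̂(n,k) and G(n,k) = cos(πn)·Ĝ(n,k). Assume F and G satisfy the WZ-pair relation F(n+1,k) − F(n,k) = G(n,k+1) − G(n,k) for all complex n, k, and that for every complex x: (i) the series ∑_{n=0}^∞ (−1)^n Ĝ(x+n, 0) and ∑_{n=0}^∞ F̂(x, n) converge; and (ii) G(x+n, 0) → 0 and G(x, n) → 0 as the integer n → ∞. Define t(x) = ∑_{n=0}^∞ (−1)^n Ĝ(x+n, 0) − ∑_{n=0}^∞ F̂(x, n). Then t(x+1) = −t(x) for every complex number x with cos(πx) ≠ 0. -/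
/-- If `F (n,k) = cos (π n) * F̂ (n,k)` and `G (n,k) = cos (π n) * Ĝ (n,k)`
form a WZ-pair with the appropriate convergence and vanishing hypotheses, then
`t x = ∑' n, (-1)^n Ĝ (x+n, 0) - ∑' n, F̂ (x, n)` satisfies `t (x+1) = -t x`
for every `x` with `cos (π x) ≠ 0`. -/
theorem wz_pair_antiperiodic (Fh Gh F G : ℂ × ℂ → ℂ)
    (hF : ∀ p : ℂ × ℂ, F p = Complex.cos ((Real.pi : ℂ) * p.1) * Fh p)
    (hG : ∀ p : ℂ × ℂ, G p = Complex.cos ((Real.pi : ℂ) * p.1) * Gh p)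
    (hWZ : ∀ n k : ℂ, F (n + 1, k) - F (n, k) = G (n, k + 1) - G (n, k))
    (hGsum : ∀ x : ℂ, Summable (fun n : ℕ => (-1 : ℂ) ^ n * Gh (x + n, 0)))
    (hFsum : ∀ x : ℂ, Summable (fun n : ℕ => Fh (x, n)))
    (hGlim : ∀ x : ℂ, Filter.Tendsto (fun n : ℕ => G (x + n, 0)) Filter.atTop (nhds 0))
    (hGlim' : ∀ x : ℂ, Filter.Tendsto (fun n : ℕ => G (x, n)) Filter.atTop (nhds 0))
    (t : ℂ → ℂ)
    (ht : ∀ x : ℂ, t x = (∑' n : ℕ, (-1 : ℂ) ^ n * Gh (x + n, 0)) - ∑' n : ℕ, Fh (x, n)) :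
    ∀ x : ℂ, Complex.cos ((Real.pi : ℂ) * x) ≠ 0 → t (x + 1) = -t x := by
  intro x hx
  have hGh : Filter.Tendsto (fun n : ℕ => Gh (x, n)) Filter.atTop (nhds 0) := by
    have h := (hGlim' x).const_mul (Complex.cos (Real.pi * x))⁻¹
    simpa only [hG, inv_mul_cancel_left₀ hx, mul_zero] using h
  have hcos : Complex.cos (Real.pi * (x + 1)) = -Complex.cos (Real.pi * x) := by
    rw [mul_add, mul_one, Complex.cos_add_pi]
  have hstep (k : ℕ) : Fh (x + 1, k) + Fh (x, k) = Gh (x, k) - Gh (x, (k + 1 : ℕ)) := by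
    have h := hWZ x k
    simp only [hF, hG, hcos] at h
    apply mul_left_cancel₀ hx
    push_cast
    linear_combination -h
  have hFtsum : (∑' n : ℕ, Fh (x + 1, n)) + ∑' n : ℕ, Fh (x, n) = Gh (x, 0) := by
    have h := ((hFsum (x + 1)).hasSum.add (hFsum x).hasSum).tendsto_sum_nat
    simp only [hstep, Finset.sum_range_sub' (fun k : ℕ => Gh (x, k))] at h
    exact tendsto_nhds_unique h (by simpa using hGh.const_sub (Gh (x, 0)))
  have hGtsum : (∑' n : ℕ, (-1 : ℂ) ^ n * Gh (x + n, 0))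
      = Gh (x, 0) - ∑' n : ℕ, (-1 : ℂ) ^ n * Gh (x + 1 + n, 0) := by
    rw [(hGsum x).tsum_eq_zero_add, sub_eq_add_neg, ← tsum_neg]
    congr 1
    · simp
    · refine tsum_congr fun n => ?_
      rw [pow_succ, Nat.cast_add_one, add_right_comm, ← add_assoc]
      ring
  rw [ht, ht]
  linear_combination hGtsum - hFtsum
end

section
/- As the real variable x tends to 1/2, the Abel sum S(x) = lim_{z→1⁻} ∑_{n=0}^∞ (−1)^n z^n · (1/2+2x)_n (1/2+x)_n² / [ (3/2−x)_n (1/2)_n² ] · (2n+1+x)/(2n+1)² satisfies S(x) = 1/2 − (2x−1) + O((2x−1)²); that is, there exist δ > 0 and C > 0 such that for all real x with |x − 1/2| < δ, the Abel limit S(x) exists and |S(x) − 1/2 + (2x−1)| ≤ C·(2x−1)². -/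
/-- The Pochhammer symbol (rising factorial) `(a)_n = a (a+1) ⋯ (a+n-1)` for real `a`. -/
def pochR (a : ℝ) (n : ℕ) : ℝ := ∏ j ∈ Finset.range n, (a + j)

open Filter Topology Finset

/-- If the averages of consecutive partial sums of `∑ b n` converge to `L`, then `∑ b n` has
Abel sum `L`. -/
theorem tendsto_abel_of_tendsto_average {b : ℕ → ℝ} {L : ℝ}
    (hs : ∀ z : ℝ, 0 < z → z < 1 → Summable fun n => b n * z ^ n)
    (hL : Tendsto (fun N => ∑ n ∈ range N, b n + ∑ n ∈ range (N + 1), b n) atTop (𝓝 (2 * L))) :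
    Tendsto (fun z : ℝ => ∑' n, b n * z ^ n) (𝓝[<] 1) (𝓝 L) := by
  let d : ℕ → ℝ := fun n => b n + if n = 0 then 0 else b (n - 1)
  have hd : ∀ N, ∑ n ∈ range (N + 1), d n = ∑ n ∈ range N, b n + ∑ n ∈ range (N + 1), b n := by
    intro N
    have h : ∑ n ∈ range (N + 1), (if n = 0 then 0 else b (n - 1)) = ∑ n ∈ range N, b n := by
      rw [sum_range_succ']
      simp
    simp only [d, sum_add_distrib, h]
    ring
  have hd' : Tendsto (fun N => ∑ n ∈ range N, d n) atTop (𝓝 (2 * L)) := by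
    rw [← tendsto_add_atTop_iff_nat 1]
    simpa only [hd] using hL
  have habel := Real.tendsto_tsum_powerSeries_nhdsWithin_lt hd'
  have hden : Tendsto (fun z : ℝ => 1 + z) (𝓝[<] 1) (𝓝 2) := by
    have h : Tendsto (fun z : ℝ => 1 + z) (𝓝 1) (𝓝 (1 + 1)) :=
      (continuous_const.add continuous_id).tendsto 1
    norm_num at h
    exact h.mono_left nhdsWithin_le_nhds
  have hquot := habel.div hden two_ne_zero
  rw [mul_div_cancel_left₀ L two_ne_zero] at hquot
  refine hquot.congr' ?_
  filter_upwards [Ioo_mem_nhdsLT (zero_lt_one (α := ℝ))] with z hz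
  have hb := hs z hz.1 hz.2
  have hshift : HasSum (fun n => (if n = 0 then 0 else b (n - 1)) * z ^ n)
      (z * ∑' n, b n * z ^ n) := by
    rw [← hasSum_nat_add_iff' 1]
    simp only [sum_range_one, if_true, zero_mul, sub_zero]
    refine (hb.hasSum.mul_left z).congr_fun ?_
    intro n
    simp [pow_succ]
    ring
  have hsum : HasSum (fun n => d n * z ^ n)
      ((∑' n, b n * z ^ n) + z * ∑' n, b n * z ^ n) := by
    refine (hb.hasSum.add hshift).congr_fun ?_
    intro n
    simp only [d]
    ring
  change (∑' n, d n * z ^ n) / (1 + z) = _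
  rw [hsum.tsum_eq, div_eq_iff (by linarith [hz.1])]
  ring

theorem pochR_succ (a : ℝ) (n : ℕ) : pochR a (n + 1) = pochR a n * (a + n) := by
  simp [pochR, prod_range_succ]

theorem pochR_pos {a : ℝ} (ha : 0 < a) (n : ℕ) : 0 < pochR a n :=
  prod_pos fun _ _ => by positivity

/-- The summand without its sign and its linear factor, in terms of `t = 2 * x - 1`. -/
noncomputable def coeffP (t : ℝ) (n : ℕ) : ℝ :=
  pochR (3/2 + t) n * pochR (1 + t/2) n ^ 2 / (pochR (1 - t/2) n * pochR (1/2) n ^ 2) /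
    (2 * (n : ℝ) + 1) ^ 2

theorem coeffP_zero (t : ℝ) : coeffP t 0 = 1 := by simp [coeffP, pochR]

theorem coeffP_pos {t : ℝ} (ht : |t| < 1/50) (n : ℕ) : 0 < coeffP t n := by
  obtain ⟨h1, h2⟩ := abs_lt.1 ht
  have ha := pochR_pos (a := 3/2 + t) (by linarith) n
  have hb := pochR_pos (a := 1 + t/2) (by linarith) n
  have hc := pochR_pos (a := 1 - t/2) (by linarith) n
  have hd := pochR_pos (a := 1/2) (by norm_num) n
  unfold coeffP
  positivity

theorem coeffP_succ {t : ℝ} (ht : |t| < 1/50) (n : ℕ) :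
    coeffP t (n + 1) = coeffP t n *
      ((n + 3/2 + t) * (n + 1 + t/2) ^ 2 / ((n + 1 - t/2) * (n + 3/2 : ℝ) ^ 2)) := by
  obtain ⟨h1, h2⟩ := abs_lt.1 ht
  have hc := (pochR_pos (a := 1 - t/2) (by linarith) n).ne'
  have hd := (pochR_pos (a := 1/2) (by norm_num) n).ne'
  have hn : (0 : ℝ) ≤ n := n.cast_nonneg
  have e1 : (1 - t/2 + n : ℝ) ≠ 0 := by linarith
  have e2 : (n + 1 - t/2 : ℝ) ≠ 0 := by linarith
  have e3 : (1/2 + n : ℝ) ≠ 0 := by positivity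
  have e4 : (2 * n + 1 : ℝ) ≠ 0 := by positivity
  have e5 : (n + 3/2 : ℝ) ≠ 0 := by positivity
  have e6 : (2 * (n + 1) + 1 : ℝ) ≠ 0 := by positivity
  simp only [coeffP, pochR_succ]
  push_cast
  rw [show (2 * n + 1 : ℝ) = 2 * (1/2 + n) by ring,
    show (2 * (n + 1) + 1 : ℝ) = 2 * (n + 3/2) by ring,
    show (n + 1 - t/2 : ℝ) = 1 - t/2 + n by ring]
  generalize hu : (1/2 + n : ℝ) = u at *
  generalize hv : (n + 3/2 : ℝ) = v at *
  generalize hw : (1 - t/2 + n : ℝ) = w at *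
  rw [show (3/2 + t + n : ℝ) = v + t by rw [← hv]; ring]
  field_simp
  ring

theorem coeffP_succ_le {t : ℝ} (ht : |t| < 1/50) (n : ℕ) :
    coeffP t (n + 1) * (4 * n + 5) ≤ coeffP t n * (4 * n + 4) := by
  obtain ⟨h1, h2⟩ := abs_lt.1 ht
  have hn : (0 : ℝ) ≤ n := n.cast_nonneg
  rw [coeffP_succ ht, mul_assoc]
  refine mul_le_mul_of_nonneg_left ?_ (coeffP_pos ht n).le
  have hden : 0 < (n + 1 - t/2) * (n + 3/2 : ℝ) ^ 2 :=
    mul_pos (by linarith) (by positivity)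
  rw [div_mul_eq_mul_div, div_le_iff₀ hden]
  calc (n + 3/2 + t) * (n + 1 + t/2) ^ 2 * (4 * n + 5)
      ≤ (n + 3/2 + 1/50) * (n + 1 + 1/100) ^ 2 * (4 * n + 5) := by
        have hb : 0 ≤ n + 1 + t/2 := by linarith
        have hb' : n + 1 + t/2 ≤ n + 1 + 1/100 := by linarith
        gcongr
    _ ≤ (4 * n + 4) * ((n + 1 - 1/100) * (n + 3/2 : ℝ) ^ 2) := by
        nlinarith [pow_nonneg hn 2, pow_nonneg hn 3, pow_nonneg hn 4]
    _ ≤ (4 * n + 4) * ((n + 1 - t/2) * (n + 3/2 : ℝ) ^ 2) := by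
        have hc : (n + 1 - 1/100 : ℝ) ≤ n + 1 - t/2 := by linarith
        gcongr

theorem coeffP_pow_four_le {t : ℝ} (ht : |t| < 1/50) (n : ℕ) :
    coeffP t n ^ 4 ≤ 1 / (n + 1) := by
  induction n with
  | zero => simp [coeffP_zero]
  | succ n ih =>
    have hn : (0 : ℝ) ≤ n := n.cast_nonneg
    have hle : coeffP t (n + 1) ≤ coeffP t n * ((4 * n + 4) / (4 * n + 5)) := by
      rw [← mul_div_assoc, le_div_iff₀ (by positivity)]
      exact coeffP_succ_le ht n
    calc coeffP t (n + 1) ^ 4 ≤ (coeffP t n * ((4 * n + 4) / (4 * n + 5))) ^ 4 :=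
          pow_le_pow_left₀ (coeffP_pos ht _).le hle 4
      _ = coeffP t n ^ 4 * ((4 * n + 4) / (4 * n + 5)) ^ 4 := mul_pow _ _ _
      _ ≤ 1 / (n + 1) * ((4 * n + 4) / (4 * n + 5)) ^ 4 := by gcongr
      _ ≤ 1 / (n + 1) * ((n + 1) / (n + 2)) := by
          gcongr
          rw [div_pow, div_le_div_iff₀ (by positivity) (by positivity)]
          nlinarith [pow_nonneg hn 2, pow_nonneg hn 3, pow_nonneg hn 4]
      _ = 1 / ((n + 1 : ℕ) + 1) := by
          push_cast
          field_simp
          ring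

theorem coeffP_le_one {t : ℝ} (ht : |t| < 1/50) (n : ℕ) : coeffP t n ≤ 1 := by
  have h : coeffP t n ^ 4 ≤ 1 := (coeffP_pow_four_le ht n).trans <| by
    rw [div_le_one (by positivity)]
    linarith [n.cast_nonneg (α := ℝ)]
  exact (pow_le_one_iff_of_nonneg (coeffP_pos ht n).le (by norm_num)).1 h

theorem tendsto_coeffP {t : ℝ} (ht : |t| < 1/50) : Tendsto (coeffP t) atTop (𝓝 0) := by
  have h4 : Tendsto (fun n => coeffP t n ^ 4) atTop (𝓝 0) :=
    squeeze_zero (fun n => by positivity) (coeffP_pow_four_le ht)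
      tendsto_one_div_add_atTop_nhds_zero_nat
  have h2 : Tendsto (fun n => coeffP t n ^ 2) atTop (𝓝 0) := by
    have h := h4.sqrt
    rw [Real.sqrt_zero] at h
    refine h.congr fun n => ?_
    rw [show coeffP t n ^ 4 = (coeffP t n ^ 2) ^ 2 by ring, Real.sqrt_sq (by positivity)]
  have h := h2.sqrt
  rw [Real.sqrt_zero] at h
  exact h.congr fun n => Real.sqrt_sq (coeffP_pos ht n).le

/-- The error, divided by `t ^ 2`, in the approximate telescoping of the summand by
`coeffP t n * (n + 1/2 - t)`. -/
noncomputable def defect (t : ℝ) (n : ℕ) : ℝ :=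
  (n + 5/4 - (n + 1) * t - t ^ 2 / 4) / ((n + 3/2) ^ 2 * (n + 1 - t/2))

theorem abs_defect_le {t : ℝ} (ht : |t| < 1/50) (n : ℕ) :
    |defect t n| ≤ 4 * (1 / ((n + 1 : ℕ) : ℝ) ^ 2) := by
  obtain ⟨h1, h2⟩ := abs_lt.1 ht
  have hn : (0 : ℝ) ≤ n := n.cast_nonneg
  have hden : 0 < (n + 3/2 : ℝ) ^ 2 * (n + 1 - t/2) := mul_pos (by positivity) (by linarith)
  rw [defect, abs_div, abs_of_pos hden, mul_one_div]
  push_cast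
  have hnum : |(n + 5/4 - (n + 1) * t - t ^ 2 / 4 : ℝ)| ≤ 2 * (n + 1) := by
    rw [abs_le]
    constructor <;> nlinarith
  calc _ ≤ 2 * (n + 1) / ((n + 1 : ℝ) ^ 2 * ((n + 1) / 2)) := by
        gcongr
        · linarith
        · linarith
    _ = 4 / (n + 1 : ℝ) ^ 2 := by
        field_simp
        ring

theorem coeffP_telescope {t : ℝ} (ht : |t| < 1/50) (n : ℕ) :
    coeffP t (n + 1) * (n + 3/2 - t) =
      coeffP t n * (n + 1 + 3 * t / 2 + t ^ 2 * defect t n) := by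
  obtain ⟨h1, h2⟩ := abs_lt.1 ht
  have hn : (0 : ℝ) ≤ n := n.cast_nonneg
  have e2 : (n + 1 - t/2 : ℝ) ≠ 0 := by linarith
  have e5 : (n + 3/2 : ℝ) ≠ 0 := by positivity
  rw [coeffP_succ ht, mul_assoc, defect]
  congr 1
  rw [mul_div_assoc', div_mul_eq_mul_div, ← sub_eq_iff_eq_add',
    sub_eq_iff_eq_add, div_add' _ _ _ (by positivity), div_eq_div_iff (by positivity) (by positivity)]
  ring

theorem sum_range_coeffP {t : ℝ} (ht : |t| < 1/50) (N : ℕ) :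
    ∑ n ∈ range N, (-1 : ℝ) ^ n * (coeffP t n * (2 * n + 3/2 + t/2)) =
      1/2 - t - (-1) ^ N * (coeffP t N * (N + 1/2 - t)) -
        t ^ 2 * ∑ n ∈ range N, (-1) ^ n * (coeffP t n * defect t n) := by
  induction N with
  | zero => simp [coeffP_zero]
  | succ N ih =>
    have h := coeffP_telescope ht N
    rw [sum_range_succ, ih, sum_range_succ]
    push_cast
    rw [show (N + 1 + 1/2 - t : ℝ) = N + 3/2 - t by ring, h]
    ring

theorem abs_coeffP_mul_defect_le {t : ℝ} (ht : |t| < 1/50) (n : ℕ) :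
    ‖(-1 : ℝ) ^ n * (coeffP t n * defect t n)‖ ≤ 4 * (1 / ((n + 1 : ℕ) : ℝ) ^ 2) := by
  rw [Real.norm_eq_abs, abs_mul, abs_mul, abs_pow, abs_neg, abs_one, one_pow, one_mul,
    abs_of_pos (coeffP_pos ht n)]
  exact (mul_le_of_le_one_left (abs_nonneg _) (coeffP_le_one ht n)).trans (abs_defect_le ht n)

theorem summable_four_mul_one_div_sq :
    Summable fun n : ℕ => 4 * (1 / ((n + 1 : ℕ) : ℝ) ^ 2) :=
  ((summable_nat_add_iff 1).2 (Real.summable_one_div_nat_pow.2 one_lt_two)).mul_left 4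

theorem tendsto_average_coeffP {t : ℝ} (ht : |t| < 1/50) :
    Tendsto (fun N => ∑ n ∈ range N, (-1 : ℝ) ^ n * (coeffP t n * (2 * n + 3/2 + t/2)) +
      ∑ n ∈ range (N + 1), (-1 : ℝ) ^ n * (coeffP t n * (2 * n + 3/2 + t/2))) atTop
      (𝓝 (2 * (1/2 - t - t ^ 2 * ∑' n, (-1) ^ n * (coeffP t n * defect t n)))) := by
  have hsum : Summable fun n => (-1 : ℝ) ^ n * (coeffP t n * defect t n) :=
    .of_norm_bounded summable_four_mul_one_div_sq (abs_coeffP_mul_defect_le ht)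
  have hR := hsum.hasSum.tendsto_sum_nat
  have hR' := (tendsto_add_atTop_iff_nat 1).2 hR
  have hterm := hsum.tendsto_atTop_zero
  have hbdy : Tendsto (fun N : ℕ => (-1 : ℝ) ^ N * coeffP t N) atTop (𝓝 0) := by
    rw [tendsto_zero_iff_abs_tendsto_zero]
    refine (tendsto_coeffP ht).congr fun N => ?_
    simp [abs_mul, abs_of_pos (coeffP_pos ht N)]
  have h := (((hR.add hR').const_mul (t ^ 2)).const_sub (2 * (1/2 - t))).add
    ((hbdy.mul_const (1/2 + 5 * t / 2)).add (hterm.const_mul (t ^ 2)))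
  convert h using 1
  · ext N
    have h := coeffP_telescope ht N
    rw [sum_range_coeffP ht, sum_range_coeffP ht]
    push_cast
    rw [show (N + 1 + 1/2 - t : ℝ) = N + 3/2 - t by ring, h]
    ring
  · congr 1
    ring

theorem summable_coeffP_mul_pow {t : ℝ} (ht : |t| < 1/50) {z : ℝ} (h0 : 0 < z) (h1 : z < 1) :
    Summable fun n : ℕ => (-1 : ℝ) ^ n * (coeffP t n * (2 * n + 3/2 + t/2)) * z ^ n := by
  obtain ⟨ht1, ht2⟩ := abs_lt.1 ht
  have hz : ‖z‖ < 1 := by rwa [Real.norm_of_nonneg h0.le]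
  have hlin : Summable fun n : ℕ => 2 * ((n : ℝ) ^ 1 * z ^ n) + 2 * z ^ n :=
    ((summable_pow_mul_geometric_of_norm_lt_one 1 hz).mul_left 2).add
      ((summable_geometric_of_norm_lt_one hz).mul_left 2)
  refine .of_norm_bounded hlin fun n => ?_
  have hn : (0 : ℝ) ≤ n := n.cast_nonneg
  have hl : (0 : ℝ) ≤ 2 * n + 3/2 + t/2 := by linarith
  rw [Real.norm_eq_abs, abs_mul, abs_mul, abs_mul, abs_pow, abs_neg, abs_one, one_pow, one_mul,
    abs_of_pos (coeffP_pos ht n), abs_of_nonneg hl, abs_of_pos (pow_pos h0 n)]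
  calc coeffP t n * (2 * n + 3/2 + t/2) * z ^ n ≤ 1 * (2 * n + 2) * z ^ n := by
        have hl' : 2 * n + 3/2 + t/2 ≤ 2 * n + 2 := by linarith
        gcongr
        exact coeffP_le_one ht n
    _ = _ := by ring

/-- **Lemma 3.** As `x → 1/2`, the Abel sum
`S x = lim_{z→1⁻} ∑_{n≥0} (-1)^n z^n (1/2+2x)_n (1/2+x)_n² / ((3/2-x)_n (1/2)_n²) · (2n+1+x)/(2n+1)²`
satisfies `S x = 1/2 - (2x-1) + O((2x-1)²)`. -/
theorem lemma3_expansion :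
    ∃ δ > (0:ℝ), ∃ C > (0:ℝ), ∀ x : ℝ, |x - 1/2| < δ →
      ∃ S : ℝ,
        Filter.Tendsto
          (fun z : ℝ => ∑' n : ℕ,
            (-1 : ℝ) ^ n * z ^ n *
              (pochR (1/2 + 2*x) n * pochR (1/2 + x) n ^ 2 /
                (pochR (3/2 - x) n * pochR (1/2) n ^ 2)) *
              ((2 * (n : ℝ) + 1 + x) / (2 * (n : ℝ) + 1) ^ 2))
          (nhdsWithin 1 (Set.Iio 1)) (nhds S) ∧
        |S - 1/2 + (2 * x - 1)| ≤ C * (2 * x - 1) ^ 2 := by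
  refine ⟨1/100, by norm_num, 1 + ∑' n : ℕ, 4 * (1 / ((n + 1 : ℕ) : ℝ) ^ 2), ?_, ?_⟩
  · have : 0 ≤ ∑' n : ℕ, 4 * (1 / ((n + 1 : ℕ) : ℝ) ^ 2) := tsum_nonneg fun n => by positivity
    linarith
  intro x hx
  obtain ⟨t, rfl⟩ : ∃ t, x = (1 + t) / 2 := ⟨2 * x - 1, by ring⟩
  have ht : |t| < 1/50 := by
    rw [abs_lt] at hx ⊢
    constructor <;> linarith
  refine ⟨_, (tendsto_abel_of_tendsto_average (fun z => summable_coeffP_mul_pow ht)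
    (tendsto_average_coeffP ht)).congr fun z => tsum_congr fun n => ?_, ?_⟩
  · rw [coeffP, show (1/2 + 2 * ((1 + t) / 2) : ℝ) = 3/2 + t by ring,
      show (1/2 + (1 + t) / 2 : ℝ) = 1 + t/2 by ring,
      show (3/2 - (1 + t) / 2 : ℝ) = 1 - t/2 by ring]
    ring
  · have hR : |∑' n, (-1 : ℝ) ^ n * (coeffP t n * defect t n)| ≤
        ∑' n : ℕ, 4 * (1 / ((n + 1 : ℕ) : ℝ) ^ 2) :=
      tsum_of_norm_bounded summable_four_mul_one_div_sq.hasSum (abs_coeffP_mul_defect_le ht)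
    rw [show ∀ R : ℝ, 1/2 - t - t ^ 2 * R - 1/2 + (2 * ((1 + t) / 2) - 1) = -(R * t ^ 2) from
      fun R => by ring, abs_neg, abs_mul, abs_of_nonneg (sq_nonneg t),
      show 2 * ((1 + t) / 2) - 1 = t by ring]
    gcongr
    linarith
end

section
/- For every real x with −1/2 < x < 1/2: (√2/4)·∑_{n=0}^∞ (−1)^n · 2^{−3(n+x)} · [ (1/2)_{n+x} / (1)_{n+x} ]³ · (6(n+x)+1) = 1/(π cos πx) + 4√2 · 8^{−x} · (x²/(2x−1)) · [ (1/2)_x / (1)_x ]³ · ∑_{n=0}^∞ 2^{−n} · (x+1/2)_n² / [ (x+1)_n · (3/2−x)_n ], where both series converge. -/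
/-- The Pochhammer symbol for real index: `(a)_t = Γ(a+t)/Γ(a)`. -/
noncomputable def pochG (a t : ℝ) : ℝ := Real.Gamma (a + t) / Real.Gamma a

open Complex in
theorem Complex.norm_cos_le_exp_abs_im (z : ℂ) : ‖cos z‖ ≤ Real.exp |z.im| := by
  have h1 : ‖exp (z * I)‖ ≤ Real.exp |z.im| := by
    rw [norm_exp]; exact Real.exp_le_exp.2 (by simpa using neg_le_abs z.im)
  have h2 : ‖exp (-z * I)‖ ≤ Real.exp |z.im| := by
    rw [norm_exp]; exact Real.exp_le_exp.2 (by simpa using le_abs_self z.im)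
  have h3 := norm_add_le (exp (z * I)) (exp (-z * I))
  rw [cos, norm_div, RCLike.norm_ofNat, div_le_iff₀ two_pos]
  linarith

open Complex in
theorem Complex.exp_abs_im_le_four_mul_norm_sin (z : ℂ) (hz : 1 ≤ |z.im|) :
    Real.exp |z.im| ≤ 4 * ‖sin z‖ := by
  have key : Real.exp |z.im| - Real.exp (-|z.im|) ≤ 2 * ‖sin z‖ := by
    have e1 : ‖exp (-z * I)‖ = Real.exp z.im := by simp [norm_exp]
    have e2 : ‖exp (z * I)‖ = Real.exp (-z.im) := by simp [norm_exp]
    have e3 : 2 * ‖sin z‖ = ‖exp (-z * I) - exp (z * I)‖ := by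
      rw [sin]; simp; ring
    rw [e3]
    have h1 := norm_sub_norm_le (exp (-z * I)) (exp (z * I))
    have h2 := norm_sub_norm_le (exp (z * I)) (exp (-z * I))
    rw [norm_sub_rev] at h2
    rw [e1, e2] at h1 h2
    rcases abs_cases z.im with ⟨h, _⟩ | ⟨h, _⟩ <;> rw [h]
    · exact h1
    · simpa using h2
  have h3 : 2 * Real.exp (-|z.im|) ≤ Real.exp |z.im| := by
    have h4 : (2 : ℝ) ≤ Real.exp |z.im| := by linarith [Real.add_one_le_exp |z.im|]
    have h5 : Real.exp (-|z.im|) * Real.exp |z.im| = 1 := by rw [← Real.exp_add]; simp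
    nlinarith [Real.exp_pos (-|z.im|)]
  linarith

/-- The quotient of an entire function by an entire function with only simple zeros, where the
numerator vanishes at these zeros, extends to an entire function. -/
theorem exists_differentiable_mul_eq {f s : ℂ → ℂ} (hf : Differentiable ℂ f)
    (hs : Differentiable ℂ s) (hzero : ∀ z, s z = 0 → f z = 0)
    (hsimple : ∀ z, s z = 0 → deriv s z ≠ 0) :
    ∃ h : ℂ → ℂ, Differentiable ℂ h ∧ (∀ z, s z ≠ 0 → h z = f z / s z) ∧
      ∀ z, s z = 0 → h z = deriv f z / deriv s z := by
  classical
  refine ⟨fun z => if s z = 0 then deriv f z / deriv s z else f z / s z, fun z₀ => ?_,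
    fun z hz => if_neg hz, fun z hz => if_pos hz⟩
  by_cases h0 : s z₀ = 0
  · have df : Differentiable ℂ (dslope f z₀) := fun z =>
      ((Complex.differentiableOn_dslope Filter.univ_mem).2 hf.differentiableOn).differentiableAt
        Filter.univ_mem
    have ds : Differentiable ℂ (dslope s z₀) := fun z =>
      ((Complex.differentiableOn_dslope Filter.univ_mem).2 hs.differentiableOn).differentiableAt
        Filter.univ_mem
    have hne : dslope s z₀ z₀ ≠ 0 := by rw [dslope_same]; exact hsimple z₀ h0
    refine ((df z₀).div (ds z₀) hne).congr_of_eventuallyEq ?_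
    filter_upwards [(ds z₀).continuousAt.eventually_ne hne] with z hz
    by_cases hzz : z = z₀
    · subst hzz; simp [h0, dslope_same]
    · have e1 := sub_smul_dslope f z₀ z
      have e2 := sub_smul_dslope s z₀ z
      rw [hzero z₀ h0, sub_zero, smul_eq_mul] at e1
      rw [h0, sub_zero, smul_eq_mul] at e2
      have hsub : z - z₀ ≠ 0 := sub_ne_zero.2 hzz
      have : s z ≠ 0 := by rw [← e2]; exact mul_ne_zero hsub hz
      simp only [this, if_false, Pi.div_apply]
      rw [← e1, ← e2, mul_div_mul_left _ _ hsub]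
  · refine ((hf z₀).div (hs z₀) h0).congr_of_eventuallyEq ?_
    filter_upwards [(hs z₀).continuousAt.eventually_ne h0] with z hz
    simp [hz]

/-- An entire function of at most linear growth is affine. -/
theorem Differentiable.exists_eq_add_mul_of_linear_growth {h : ℂ → ℂ} (hh : Differentiable ℂ h)
    {C : ℝ} (hb : ∀ z, ‖h z‖ ≤ C * (1 + ‖z‖)) : ∃ K, ∀ z, h z = h 0 + K * z := by
  have dd : Differentiable ℂ (dslope h 0) := fun z =>
    ((Complex.differentiableOn_dslope Filter.univ_mem).2 hh.differentiableOn).differentiableAt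
      Filter.univ_mem
  have hC : 0 ≤ C := by simpa using (norm_nonneg _).trans (hb 0)
  have hbd : Bornology.IsBounded (Set.range (dslope h 0)) := by
    obtain ⟨M, hM⟩ := (isCompact_closedBall (0 : ℂ) 1).exists_bound_of_continuousOn
      dd.continuous.continuousOn
    refine isBounded_iff_forall_norm_le.2 ⟨max M (3 * C), ?_⟩
    rintro _ ⟨z, rfl⟩
    rcases le_or_gt ‖z‖ 1 with hz | hz
    · exact (hM z (by simpa using hz)).trans (le_max_left _ _)
    · refine le_trans ?_ (le_max_right _ _)
      have e := congrArg (‖·‖) (sub_smul_dslope h 0 z)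
      simp only [sub_zero, norm_smul] at e
      have h1 := norm_sub_le (h z) (h 0)
      have h2 := hb z
      have h3 := hb 0
      rw [norm_zero] at h3
      by_contra! hcon
      nlinarith
  obtain ⟨K, hK⟩ := dd.exists_const_forall_eq_of_bounded hbd
  refine ⟨K, fun z => ?_⟩
  have e := sub_smul_dslope h 0 z
  rw [hK, sub_zero, smul_eq_mul] at e
  linear_combination -e

/-- A function of period or antiperiod `1` in norm takes its norms on the strip `0 < re z ≤ 1`. -/
theorem exists_mem_strip_norm_eq {h : ℂ → ℂ} (hh : ∀ z, ‖h (z + 1)‖ = ‖h z‖) (z : ℂ) :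
    ∃ w : ℂ, 0 < w.re ∧ w.re ≤ 1 ∧ w.im = z.im ∧ ‖h z‖ = ‖h w‖ := by
  have hper : Function.Periodic (fun z => ‖h z‖) (1 : ℂ) := hh
  refine ⟨z - ((⌈z.re⌉ - 1 : ℤ) : ℂ), ?_, ?_, by simp, ?_⟩
  · simp; linarith [Int.ceil_lt_add_one z.re]
  · simp; linarith [Int.le_ceil z.re]
  · have := hper.sub_int_mul_eq (x := z) (⌈z.re⌉ - 1)
    simpa using this.symm

/-- An entire function of period `1` whose growth in the imaginary direction is at most
`|y| exp (π |y|)` is constant. -/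
theorem eq_const_of_periodic_of_growth {F : ℂ → ℂ} (hF : Differentiable ℂ F)
    (hper : ∀ z, F (z + 1) = F z) {C : ℝ}
    (hb : ∀ z : ℂ, 0 < z.re → z.re ≤ 1 → 1 ≤ |z.im| →
      ‖F z‖ ≤ C * (|z.im| * Real.exp (Real.pi * |z.im|))) (z : ℂ) : F z = F 0 := by
  have hπ : (Real.pi : ℂ) ≠ 0 := by exact_mod_cast Real.pi_ne_zero
  have hperZ : ∀ k : ℤ, F k = F 0 := fun k => by
    have : Function.Periodic F (1 : ℂ) := hper
    simpa using this.int_mul_eq k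
  obtain ⟨h, hh, hne, heq⟩ := exists_differentiable_mul_eq (f := fun z => F z - F 0)
    (s := fun z => Complex.sin (Real.pi * z)) (hF.sub_const _) (by fun_prop)
    (fun z hz => by
      obtain ⟨k, hk⟩ := Complex.sin_eq_zero_iff.1 hz
      have : z = k := mul_left_cancel₀ hπ (by rw [hk]; ring)
      simp [this, hperZ])
    (fun z hz => by
      have hd : HasDerivAt (fun z : ℂ => Complex.sin (Real.pi * z))
          (Complex.cos (Real.pi * z) * Real.pi) z := by
        simpa using (hasDerivAt_id z).const_mul (Real.pi : ℂ) |>.csin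
      rw [hd.deriv]
      refine mul_ne_zero (fun hc => ?_) hπ
      have := Complex.sin_sq_add_cos_sq (Real.pi * z)
      rw [hz, hc] at this
      norm_num at this)
  have hanti : ∀ z, h (z + 1) = -h z := by
    intro z
    have hs : ∀ w : ℂ, Complex.sin (Real.pi * (w + 1)) = -Complex.sin (Real.pi * w) := fun w => by
      rw [mul_add, mul_one, Complex.sin_add_pi]
    by_cases h0 : Complex.sin (Real.pi * z) = 0
    · rw [heq z h0, heq (z + 1) (by rw [hs, h0, neg_zero])]
      have d1 : deriv (fun z => F z - F 0) (z + 1) = deriv (fun z => F z - F 0) z := by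
        rw [← deriv_comp_add_const]; simp only [hper]
      have d2 : deriv (fun z : ℂ => Complex.sin (Real.pi * z)) (z + 1)
          = -deriv (fun z : ℂ => Complex.sin (Real.pi * z)) z := by
        rw [← deriv_comp_add_const]; simp only [hs]; rw [deriv.fun_neg]
      rw [d1, d2, div_neg]
    · rw [hne z h0, hne (z + 1) (by rw [hs]; simpa using h0)]
      simp only [hs, hper, div_neg]
  have hlin : ∃ D, ∀ z, ‖h z‖ ≤ D * (1 + ‖z‖) := by
    have hcomp : IsCompact (Set.Icc (0 : ℝ) 1 ×ℂ Set.Icc (-1 : ℝ) 1) :=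
      isCompact_Icc.reProdIm isCompact_Icc
    obtain ⟨M, hM⟩ := hcomp.exists_bound_of_continuousOn hh.continuous.continuousOn
    refine ⟨max M (4 * (|C| + ‖F 0‖)), fun z => ?_⟩
    obtain ⟨w, hw0, hw1, hwim, hnorm⟩ :=
      exists_mem_strip_norm_eq (h := h) (fun z => by rw [hanti, norm_neg]) z
    rw [hnorm]
    have hMx : 0 ≤ max M (4 * (|C| + ‖F 0‖)) := le_max_of_le_right (by positivity)
    rcases le_or_gt |w.im| 1 with hy | hy
    · have := hM w ⟨⟨hw0.le, hw1⟩, abs_le.1 hy⟩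
      have h1 := le_max_left M (4 * (|C| + ‖F 0‖))
      nlinarith [norm_nonneg z]
    · have him : ((Real.pi : ℂ) * w).im = Real.pi * w.im := by simp
      have habs : |((Real.pi : ℂ) * w).im| = Real.pi * |w.im| := by
        rw [him, abs_mul, abs_of_pos Real.pi_pos]
      have hs := Complex.exp_abs_im_le_four_mul_norm_sin (Real.pi * w)
        (by rw [habs]; nlinarith [Real.pi_gt_three])
      rw [habs] at hs
      have hpos := Real.exp_pos (Real.pi * |w.im|)
      have hone : 1 ≤ Real.exp (Real.pi * |w.im|) := Real.one_le_exp (by positivity)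
      have hsne : Complex.sin (Real.pi * w) ≠ 0 := fun h0 => by
        rw [h0, norm_zero] at hs; linarith
      rw [hne w hsne, norm_div, div_le_iff₀ (norm_pos_iff.2 hsne)]
      have h1 := hb w hw0 hw1 hy.le
      have h2 := norm_sub_le (F w) (F 0)
      have h3 : |w.im| ≤ ‖z‖ := by rw [hwim]; exact Complex.abs_im_le_norm z
      have h4 := le_max_right M (4 * (|C| + ‖F 0‖))
      set E := Real.exp (Real.pi * |w.im|)
      have h5 : C * (|w.im| * E) ≤ |C| * ((1 + ‖z‖) * E) :=
        mul_le_mul (le_abs_self C) (by gcongr; linarith) (by positivity) (by positivity)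
      have h6 : ‖F 0‖ ≤ ‖F 0‖ * ((1 + ‖z‖) * E) :=
        le_mul_of_one_le_right (norm_nonneg _) (by nlinarith [norm_nonneg z])
      calc ‖F w - F 0‖ ≤ (|C| + ‖F 0‖) * ((1 + ‖z‖) * E) := by linarith
        _ ≤ (|C| + ‖F 0‖) * ((1 + ‖z‖) * (4 * ‖Complex.sin (Real.pi * w)‖)) := by gcongr
        _ = 4 * (|C| + ‖F 0‖) * (1 + ‖z‖) * ‖Complex.sin (Real.pi * w)‖ := by ring
        _ ≤ _ := by gcongr
  obtain ⟨D, hD⟩ := hlin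
  obtain ⟨K, hK⟩ := hh.exists_eq_add_mul_of_linear_growth hD
  have e1 := hanti 0
  have e2 := hanti 1
  rw [hK (1 + 1), hK 1] at e2
  rw [zero_add, hK 1] at e1
  have hK0 : K = 0 := by linear_combination (e2 - e1) / 2
  have hh0 : ∀ z, h z = 0 := fun z => by
    rw [hK z, hK0]; rw [hK0] at e1; linear_combination (1 / 2) * e1
  by_cases h0 : Complex.sin (Real.pi * z) = 0
  · obtain ⟨k, hk⟩ := Complex.sin_eq_zero_iff.1 h0
    have : z = k := mul_left_cancel₀ hπ (by rw [hk]; ring)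
    rw [this, hperZ]
  · have := hne z h0
    rw [hh0, eq_comm, div_eq_zero_iff, or_iff_left h0] at this
    exact sub_eq_zero.1 this

theorem exists_norm_Gamma_add_half_le :
    ∃ C : ℝ, 0 ≤ C ∧ ∀ w : ℂ, 0 ≤ w.re →
      ‖Complex.Gamma (w + 1 / 2) / Complex.Gamma (w + 1)‖ ≤ C := by
  have hG : ‖Complex.Gamma (1 / 2)‖ ≠ 0 := by
    rw [norm_ne_zero_iff]; exact Complex.Gamma_ne_zero_of_re_pos (by norm_num)
  have hconv := Complex.betaIntegral_convergent (u := 1 / 2) (v := 1 / 2) (by norm_num) (by norm_num)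
  refine ⟨(∫ t : ℝ in 0..1, ‖(t : ℂ) ^ ((1 / 2 : ℂ) - 1) * (1 - (t : ℂ)) ^ ((1 / 2 : ℂ) - 1)‖) /
    ‖Complex.Gamma (1 / 2)‖, ?_, fun w hw => ?_⟩
  · exact div_nonneg (intervalIntegral.integral_nonneg zero_le_one fun _ _ => norm_nonneg _)
      (norm_nonneg _)
  · have hre : 0 < (w + 1 / 2).re := by simp; linarith
    have key := Complex.Gamma_mul_Gamma_eq_betaIntegral hre (t := 1 / 2) (by norm_num)
    rw [show w + 1 / 2 + 1 / 2 = w + 1 by ring] at key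
    have hne : Complex.Gamma (w + 1) ≠ 0 :=
      Complex.Gamma_ne_zero_of_re_pos (by simp; linarith)
    have hval : Complex.Gamma (w + 1 / 2) / Complex.Gamma (w + 1)
        = Complex.betaIntegral (w + 1 / 2) (1 / 2) / Complex.Gamma (1 / 2) := by
      rw [div_eq_div_iff hne (norm_ne_zero_iff.1 hG), key, mul_comm]
    rw [hval, norm_div]
    refine div_le_div_of_nonneg_right ?_ (norm_nonneg _)
    refine intervalIntegral.norm_integral_le_of_norm_le zero_le_one ?_ hconv.norm
    refine MeasureTheory.ae_of_all _ fun t ht => ?_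
    rw [norm_mul, norm_mul]
    refine mul_le_mul_of_nonneg_right ?_ (norm_nonneg _)
    rw [Complex.norm_cpow_eq_rpow_re_of_pos ht.1, Complex.norm_cpow_eq_rpow_re_of_pos ht.1]
    exact Real.rpow_le_rpow_of_exponent_ge ht.1 ht.2 (by simp; linarith)

/-- `1 / Γ(s) = s / Γ(s + 1)` for every `s`. -/
theorem inv_Gamma_eq_mul_inv_Gamma_add_one (s : ℂ) :
    (Complex.Gamma s)⁻¹ = s * (Complex.Gamma (s + 1))⁻¹ :=
  Complex.one_div_Gamma_eq_self_mul_one_div_Gamma_add_one s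

theorem inv_Gamma_half_sub (w : ℂ) (hw : -1 / 2 < w.re) :
    (Complex.Gamma (1 / 2 - w))⁻¹
      = Complex.cos (Real.pi * w) * Complex.Gamma (w + 1 / 2) / Real.pi := by
  have hne : Complex.Gamma (w + 1 / 2) ≠ 0 :=
    Complex.Gamma_ne_zero_of_re_pos (by simp; linarith)
  have h := Complex.Gamma_mul_Gamma_one_sub (w + 1 / 2)
  rw [show 1 - (w + 1 / 2) = 1 / 2 - w by ring,
    show (Real.pi : ℂ) * (w + 1 / 2) = Real.pi * w + Real.pi / 2 by ring,
    Complex.sin_add_pi_div_two] at h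
  have h2 : Complex.Gamma (1 / 2 - w)
      = (Complex.cos (Real.pi * w) * Complex.Gamma (w + 1 / 2) / Real.pi)⁻¹ := by
    rw [inv_div, ← div_div, ← h, mul_div_cancel_left₀ _ hne]
  rw [h2, inv_inv]

/-- The summand of the alternating series, multiplied by `cos (π w)` and freed of constants. -/
noncomputable def cosTerm (w : ℂ) : ℂ :=
  Complex.cos (Real.pi * w) * (8 : ℂ) ^ (-w) *
    (Complex.Gamma (w + 1 / 2) / Complex.Gamma (w + 1)) ^ 3 * (6 * w + 1)

/-- The summand `2⁻ᵏ Γ(z + 1/2 + k)² / (Γ(z + 1 + k) Γ(3/2 - z + k))`. -/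
noncomputable def gammaKernel (z : ℂ) (k : ℕ) : ℂ :=
  (1 / 2) ^ k * Complex.Gamma (z + 1 / 2 + k) ^ 2 * (Complex.Gamma (z + 1 + k))⁻¹ *
    (Complex.Gamma (3 / 2 - z + k))⁻¹

/-- The first member of the Wilf–Zeilberger pair. -/
noncomputable def wzTerm (z : ℂ) (k : ℕ) : ℂ :=
  (8 : ℂ) ^ (-z) * (Complex.Gamma z)⁻¹ ^ 2 * gammaKernel z k

/-- The second member of the Wilf–Zeilberger pair. -/
noncomputable def wzCert (z : ℂ) (k : ℕ) : ℂ :=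
  -(1 / 8) * (8 : ℂ) ^ (-z) * (Complex.Gamma (z + 1))⁻¹ ^ 2 * (6 * z + 2 * k + 1) *
    (1 / 2 - z + k) * gammaKernel z k

theorem gammaKernel_succ {z : ℂ} {k : ℕ} (h : z + 1 / 2 + k ≠ 0) :
    gammaKernel z (k + 1) * ((z + 1 + k) * (3 / 2 - z + k))
      = 1 / 2 * (z + 1 / 2 + k) ^ 2 * gammaKernel z k := by
  unfold gammaKernel
  rw [inv_Gamma_eq_mul_inv_Gamma_add_one (z + 1 + k),
    inv_Gamma_eq_mul_inv_Gamma_add_one (3 / 2 - z + k)]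
  push_cast
  rw [← add_assoc, ← add_assoc, ← add_assoc, Complex.Gamma_add_one _ h]
  ring

theorem wzTerm_add_one_sub {z : ℂ} (hz : -1 / 2 < z.re) (k : ℕ) :
    wzTerm (z + 1) k - wzTerm z k = wzCert z (k + 1) - wzCert z k := by
  have h : z + 1 / 2 + k ≠ 0 := fun h => by
    have := congrArg Complex.re h
    simp at this
    linarith [(Nat.cast_nonneg k : (0 : ℝ) ≤ k)]
  have h8 : (8 : ℂ) ^ (-(z + 1)) = (8 : ℂ) ^ (-z) / 8 := by
    rw [neg_add, Complex.cpow_add _ _ (by norm_num), Complex.cpow_neg_one]; ring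
  unfold wzTerm wzCert gammaKernel
  rw [h8, inv_Gamma_eq_mul_inv_Gamma_add_one z,
    show z + 1 + 1 / 2 + k = z + 1 / 2 + k + 1 by ring,
    show z + 1 / 2 + ((k + 1 : ℕ) : ℂ) = z + 1 / 2 + k + 1 by push_cast; ring,
    Complex.Gamma_add_one _ h,
    show z + 1 + ((k + 1 : ℕ) : ℂ) = z + 1 + k + 1 by push_cast; ring,
    show z + 1 + 1 + (k : ℂ) = z + 1 + k + 1 by ring,
    inv_Gamma_eq_mul_inv_Gamma_add_one (z + 1 + k),
    inv_Gamma_eq_mul_inv_Gamma_add_one (3 / 2 - (z + 1) + k),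
    show 3 / 2 - (z + 1) + (k : ℂ) + 1 = 3 / 2 - z + k by ring,
    inv_Gamma_eq_mul_inv_Gamma_add_one (3 / 2 - z + k),
    show 3 / 2 - z + ((k + 1 : ℕ) : ℂ) = 3 / 2 - z + k + 1 by push_cast; ring]
  push_cast
  ring

theorem wzCert_zero {z : ℂ} (hz : -1 / 2 < z.re) :
    wzCert z 0 = -(1 / (8 * Real.pi)) * cosTerm z := by
  have h := inv_Gamma_eq_mul_inv_Gamma_add_one (1 / 2 - z)
  rw [inv_Gamma_half_sub z hz, show 1 / 2 - z + 1 = 3 / 2 - z by ring] at h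
  unfold wzCert gammaKernel cosTerm
  simp only [Nat.cast_zero, add_zero, mul_zero, pow_zero, one_mul]
  calc _ = -(1 / 8) * (8 : ℂ) ^ (-z) * (Complex.Gamma (z + 1))⁻¹ ^ 3 * (6 * z + 1) *
        Complex.Gamma (z + 1 / 2) ^ 2 * ((1 / 2 - z) * (Complex.Gamma (3 / 2 - z))⁻¹) := by ring
    _ = _ := by rw [← h]; field_simp

theorem norm_gammaKernel_succ_le {z : ℂ} {k : ℕ} (hk : 20 * ‖z‖ + 20 ≤ k) :
    ‖gammaKernel z (k + 1)‖ ≤ 3 / 4 * ‖gammaKernel z k‖ := by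
  set R := ‖z‖ with hR
  have hR0 : 0 ≤ R := norm_nonneg z
  have hkn : ‖(k : ℂ)‖ = k := by simp
  have b1 : ‖z + 1 / 2 + k‖ ≤ k + R + 1 / 2 := by
    have := norm_add₃_le (a := z) (b := 1 / 2) (c := (k : ℂ))
    rw [hkn] at this; norm_num at this ⊢; linarith
  have lower : ∀ (a : ℝ) (u : ℂ), 0 ≤ a → ‖u‖ = R → a - R ≤ ‖(a : ℂ) - u‖ := fun a u ha hu => by
    simpa [hu, abs_of_nonneg ha] using norm_sub_norm_le (a : ℂ) u
  have b1' : (k : ℝ) + 1 / 2 - R ≤ ‖z + 1 / 2 + k‖ := by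
    rw [show z + 1 / 2 + k = ((k + 1 / 2 : ℝ) : ℂ) - -z by push_cast; ring]
    exact lower _ _ (by positivity) (norm_neg z)
  have b2 : (k : ℝ) + 1 - R ≤ ‖z + 1 + k‖ := by
    rw [show z + 1 + k = ((k + 1 : ℝ) : ℂ) - -z by push_cast; ring]
    exact lower _ _ (by positivity) (norm_neg z)
  have b3 : (k : ℝ) + 3 / 2 - R ≤ ‖3 / 2 - z + k‖ := by
    rw [show 3 / 2 - z + k = ((k + 3 / 2 : ℝ) : ℂ) - z by push_cast; ring]
    exact lower _ _ (by positivity) rfl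
  have hne : z + 1 / 2 + k ≠ 0 := norm_pos_iff.1 (by linarith)
  have key := congrArg (‖·‖) (gammaKernel_succ hne)
  simp only [norm_mul, norm_pow] at key
  norm_num at key
  have hD : (k + 1 - R) * (k + 3 / 2 - R) ≤ ‖z + 1 + k‖ * ‖3 / 2 - z + k‖ :=
    mul_le_mul b2 b3 (by linarith) (norm_nonneg _)
  have hN : ‖z + 1 / 2 + k‖ ^ 2 ≤ (k + R + 1 / 2) ^ 2 := by gcongr
  have hpoly : 1 / 2 * (k + R + 1 / 2) ^ 2 ≤ 3 / 4 * ((k + 1 - R) * (k + 3 / 2 - R)) := by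
    nlinarith
  have hDpos : 0 < ‖z + 1 + k‖ * ‖3 / 2 - z + k‖ :=
    lt_of_lt_of_le (mul_pos (by linarith) (by linarith)) hD
  refine le_of_mul_le_mul_right ?_ hDpos
  have hN' : 1 / 2 * ‖z + 1 / 2 + k‖ ^ 2 ≤ 3 / 4 * (‖z + 1 + k‖ * ‖3 / 2 - z + k‖) := by linarith
  calc _ = 1 / 2 * ‖z + 1 / 2 + k‖ ^ 2 * ‖gammaKernel z k‖ := by norm_num; linarith
    _ ≤ 3 / 4 * (‖z + 1 + k‖ * ‖3 / 2 - z + k‖) * ‖gammaKernel z k‖ := by gcongr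
    _ = _ := by ring

theorem norm_gammaKernel_add_le {z : ℂ} {N : ℕ} (hN : 20 * ‖z‖ + 20 ≤ N) (m : ℕ) :
    ‖gammaKernel z (m + N)‖ ≤ (3 / 4) ^ m * ‖gammaKernel z N‖ := by
  induction m with
  | zero => simp
  | succ m ih =>
    rw [show m + 1 + N = m + N + 1 by ring]
    have := norm_gammaKernel_succ_le (z := z) (k := m + N)
      (by push_cast; linarith [(Nat.cast_nonneg m : (0 : ℝ) ≤ m)])
    rw [pow_succ]
    linarith

theorem summable_gammaKernel (z : ℂ) : Summable (gammaKernel z) := by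
  obtain ⟨N, hN⟩ := exists_nat_ge (20 * ‖z‖ + 20)
  rw [← summable_nat_add_iff N]
  refine Summable.of_norm_bounded ?_ (norm_gammaKernel_add_le hN)
  exact (summable_geometric_of_lt_one (by norm_num) (by norm_num)).mul_right _

theorem tendsto_wzCert (z : ℂ) : Filter.Tendsto (wzCert z) Filter.atTop (nhds 0) := by
  obtain ⟨N, hN⟩ := exists_nat_ge (20 * ‖z‖ + 20)
  rw [← Filter.tendsto_add_atTop_iff_nat N]
  have hk : ∀ j : ℕ, Filter.Tendsto (fun m : ℕ => (m : ℂ) ^ j * gammaKernel z (m + N))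
      Filter.atTop (nhds 0) := by
    intro j
    refine squeeze_zero_norm (a := fun m : ℕ => (m : ℝ) ^ j * (3 / 4) ^ m * ‖gammaKernel z N‖)
      (fun m => ?_) ?_
    · rw [norm_mul, norm_pow, Complex.norm_natCast, mul_assoc]
      gcongr
      exact norm_gammaKernel_add_le hN m
    · have := (tendsto_pow_const_mul_const_pow_of_abs_lt_one j
        (show |(3 / 4 : ℝ)| < 1 by rw [abs_of_pos] <;> norm_num)).mul_const ‖gammaKernel z N‖
      simpa using this
  set c : ℂ := -(1 / 8) * (8 : ℂ) ^ (-z) * (Complex.Gamma (z + 1))⁻¹ ^ 2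
  have := (((hk 2).const_mul (2 * c)).add
    ((hk 1).const_mul (c * (2 * (1 / 2 - z + N) + (6 * z + 2 * N + 1))))).add
    ((hk 0).const_mul (c * ((1 / 2 - z + N) * (6 * z + 2 * N + 1))))
  simp only [mul_zero, add_zero] at this
  refine this.congr fun m => ?_
  simp only [wzCert, c]
  push_cast
  ring

theorem norm_cosTerm_add_le {C : ℝ} (hC : ∀ w : ℂ, 0 ≤ w.re →
      ‖Complex.Gamma (w + 1 / 2) / Complex.Gamma (w + 1)‖ ≤ C) {z : ℂ} (hz : 0 ≤ z.re) (n : ℕ) :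
    ‖cosTerm (z + n)‖ ≤
      Real.exp (Real.pi * |z.im|) * C ^ 3 * ((1 / 8) ^ n * (6 * n + 6 * ‖z‖ + 1)) := by
  have hre : (z + n).re = z.re + n := by simp
  have h1 : ‖Complex.cos (Real.pi * (z + n))‖ ≤ Real.exp (Real.pi * |z.im|) := by
    refine (Complex.norm_cos_le_exp_abs_im _).trans_eq ?_
    congr 1
    simp [abs_mul, abs_of_pos Real.pi_pos]
  have h2 : ‖(8 : ℂ) ^ (-(z + n))‖ ≤ (1 / 8) ^ n := by
    have := Complex.norm_cpow_eq_rpow_re_of_pos (show (0 : ℝ) < 8 by norm_num) (-(z + n))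
    push_cast at this
    rw [this, one_div, inv_pow, ← Real.rpow_natCast, ← Real.rpow_neg (by norm_num)]
    refine Real.rpow_le_rpow_of_exponent_le (by norm_num) ?_
    simp; linarith
  have h3 := hC (z + n) (by rw [hre]; positivity)
  have hC0 : 0 ≤ C := (norm_nonneg _).trans h3
  have h4 : ‖6 * (z + n) + 1‖ ≤ 6 * n + 6 * ‖z‖ + 1 := by
    refine (norm_add_le _ _).trans ?_
    rw [norm_mul, norm_one]
    have := norm_add_le z (n : ℂ)
    rw [Complex.norm_natCast] at this
    norm_num
    linarith
  unfold cosTerm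
  rw [norm_mul, norm_mul, norm_mul, norm_pow]
  calc _ ≤ Real.exp (Real.pi * |z.im|) * (1 / 8) ^ n * C ^ 3 * (6 * n + 6 * ‖z‖ + 1) := by gcongr
    _ = _ := by ring

theorem summable_eighth_pow_mul (a : ℝ) :
    Summable fun n : ℕ => (1 / 8 : ℝ) ^ n * (6 * n + a) := by
  have h1 := summable_pow_mul_geometric_of_norm_lt_one (R := ℝ) 1 (r := 1 / 8) (by norm_num)
  have h0 := summable_geometric_of_lt_one (r := (1 / 8 : ℝ)) (by norm_num) (by norm_num)
  refine ((h1.mul_left 6).add (h0.mul_left a)).congr fun n => ?_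
  ring

theorem summable_cosTerm {z : ℂ} (hz : -1 < z.re) : Summable fun n : ℕ => cosTerm (z + n) := by
  obtain ⟨C, -, hC⟩ := exists_norm_Gamma_add_half_le
  rw [← summable_nat_add_iff 1]
  have h : ∀ n : ℕ, ‖cosTerm (z + (n + 1 : ℕ))‖ ≤ Real.exp (Real.pi * |(z + 1).im|) * C ^ 3 *
      ((1 / 8) ^ n * (6 * n + (6 * ‖z + 1‖ + 1))) := fun n => by
    have := norm_cosTerm_add_le hC (z := z + 1) (by simp; linarith) n
    rw [show z + ((n + 1 : ℕ) : ℂ) = z + 1 + n by push_cast; ring, ← add_assoc]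
    exact this
  exact Summable.of_norm_bounded ((summable_eighth_pow_mul _).mul_left _) h

/-- The combination of the two series which turns out to be constant. -/
noncomputable def wzTotal (z : ℂ) : ℂ :=
  1 / (4 * Real.pi) * ∑' n : ℕ, cosTerm (z + n) + 2 * ∑' k : ℕ, wzTerm z k

theorem summable_wzTerm (z : ℂ) : Summable (wzTerm z) := (summable_gammaKernel z).mul_left _

theorem wzTotal_add_one {z : ℂ} (hz : -1 / 2 < z.re) : wzTotal (z + 1) = wzTotal z := by
  have h1 : ∑' n : ℕ, cosTerm (z + n) = cosTerm z + ∑' n : ℕ, cosTerm (z + 1 + n) := by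
    rw [(summable_cosTerm (by linarith)).tsum_eq_zero_add]
    simp only [Nat.cast_zero, add_zero, Nat.cast_add, Nat.cast_one]
    congr 2 with n
    ring_nf
  have h2 : ∑' k, wzTerm (z + 1) k - ∑' k, wzTerm z k = -wzCert z 0 := by
    have hs := (summable_wzTerm (z + 1)).sub (summable_wzTerm z)
    rw [← (summable_wzTerm (z + 1)).tsum_sub (summable_wzTerm z)]
    refine tendsto_nhds_unique hs.hasSum.tendsto_sum_nat ?_
    simp only [wzTerm_add_one_sub hz, Finset.sum_range_sub]
    simpa using (tendsto_wzCert z).sub_const (wzCert z 0)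
  rw [wzCert_zero hz] at h2
  have hπ : (Real.pi : ℂ) ≠ 0 := by exact_mod_cast Real.pi_ne_zero
  unfold wzTotal
  rw [h1]
  field_simp at h2 ⊢
  linear_combination h2

theorem wzTotal_add_nat {z : ℂ} (hz : -1 / 2 < z.re) (n : ℕ) : wzTotal (z + n) = wzTotal z := by
  induction n with
  | zero => simp
  | succ n ih =>
    push_cast
    rw [← add_assoc, wzTotal_add_one (by simp; linarith [(Nat.cast_nonneg n : (0 : ℝ) ≤ n)]), ih]

theorem differentiableAt_Gamma_of_re_pos {s : ℂ} (hs : 0 < s.re) :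
    DifferentiableAt ℂ Complex.Gamma s :=
  Complex.differentiableAt_Gamma s fun m h => by
    rw [h] at hs
    simp at hs
    linarith [(Nat.cast_nonneg m : (0 : ℝ) ≤ m)]

theorem differentiableAt_gammaKernel {z : ℂ} (hz : 0 < z.re) (k : ℕ) :
    DifferentiableAt ℂ (fun z => gammaKernel z k) z := by
  have hk : (0 : ℝ) ≤ k := Nat.cast_nonneg k
  have h1 : DifferentiableAt ℂ (fun z : ℂ => Complex.Gamma (z + 1 / 2 + k)) z :=
    (differentiableAt_Gamma_of_re_pos (by simp; linarith)).comp z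
      (f := fun z : ℂ => z + 1 / 2 + k) (by fun_prop)
  have h2 : DifferentiableAt ℂ (fun z : ℂ => (Complex.Gamma (z + 1 + k))⁻¹) z :=
    (Complex.differentiable_one_div_Gamma _).comp z (f := fun z : ℂ => z + 1 + k) (by fun_prop)
  have h3 : DifferentiableAt ℂ (fun z : ℂ => (Complex.Gamma (3 / 2 - z + k))⁻¹) z :=
    (Complex.differentiable_one_div_Gamma _).comp z (f := fun z : ℂ => 3 / 2 - z + k) (by fun_prop)
  exact (((h1.pow 2).const_mul _).mul h2).mul h3

theorem differentiableAt_cosTerm {z : ℂ} (hz : 0 < z.re) : DifferentiableAt ℂ cosTerm z := by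
  have h1 : DifferentiableAt ℂ (fun z : ℂ => Complex.Gamma (z + 1 / 2)) z :=
    (differentiableAt_Gamma_of_re_pos (by simp; linarith)).comp z
      (f := fun z : ℂ => z + 1 / 2) (by fun_prop)
  have h2 : DifferentiableAt ℂ (fun z : ℂ => Complex.Gamma (z + 1)) z :=
    (differentiableAt_Gamma_of_re_pos (by simp; linarith)).comp z
      (f := fun z : ℂ => z + 1) (by fun_prop)
  have h3 : Complex.Gamma (z + 1) ≠ 0 := Complex.Gamma_ne_zero_of_re_pos (by simp; linarith)
  have h4 : DifferentiableAt ℂ (fun z : ℂ => (8 : ℂ) ^ (-z)) z :=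
    differentiableAt_id.neg.const_cpow (Or.inl (by norm_num))
  have h5 : DifferentiableAt ℂ (fun z : ℂ => Complex.cos (Real.pi * z)) z := by fun_prop
  exact ((h5.mul h4).mul ((h1.div h2 h3).pow 3)).mul (by fun_prop)

theorem differentiableAt_wzTotal {z₀ : ℂ} (hz₀ : 0 < z₀.re) : DifferentiableAt ℂ wzTotal z₀ := by
  set ρ := z₀.re / 2 with hρ
  have hρ0 : 0 < ρ := by positivity
  have hre : ∀ z ∈ Metric.closedBall z₀ ρ, 0 < z.re := fun z hz => by
    have h1 := Complex.abs_re_le_norm (z - z₀)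
    rw [Metric.mem_closedBall, dist_eq_norm] at hz
    have h2 := neg_abs_le (z - z₀).re
    rw [Complex.sub_re] at h1 h2
    linarith
  have hnorm : ∀ z ∈ Metric.closedBall z₀ ρ, ‖z‖ ≤ ‖z₀‖ + ρ := fun z hz => by
    rw [Metric.mem_closedBall, dist_eq_norm] at hz
    linarith [norm_le_norm_add_norm_sub' z z₀]
  have hsub : ∀ z ∈ Metric.ball z₀ ρ, z ∈ Metric.closedBall z₀ ρ := fun z hz =>
    Metric.ball_subset_closedBall hz
  have hnhds : Metric.ball z₀ ρ ∈ nhds z₀ := Metric.ball_mem_nhds _ hρ0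
  have hcos : DifferentiableAt ℂ (fun z => ∑' n : ℕ, cosTerm (z + n)) z₀ := by
    obtain ⟨C, hC0, hC⟩ := exists_norm_Gamma_add_half_le
    refine (Complex.differentiableOn_tsum_of_summable_norm (U := Metric.ball z₀ ρ)
      (u := fun n : ℕ => Real.exp (Real.pi * (‖z₀‖ + ρ)) * C ^ 3 *
        ((1 / 8) ^ n * (6 * n + (6 * (‖z₀‖ + ρ) + 1))))
      ((summable_eighth_pow_mul _).mul_left _) (fun n z hz => ?_) Metric.isOpen_ball
      (fun n z hz => ?_)).differentiableAt hnhds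
    · exact ((differentiableAt_cosTerm (z := z + n) (by
        simp; linarith [hre z (hsub z hz), (Nat.cast_nonneg n : (0 : ℝ) ≤ n)])).comp z
        (f := fun z : ℂ => z + n) (by fun_prop)).differentiableWithinAt
    · refine (norm_cosTerm_add_le hC (hre z (hsub z hz)).le n).trans ?_
      have h1 := hnorm z (hsub z hz)
      have h2 := (Complex.abs_im_le_norm z).trans h1
      rw [add_assoc]
      gcongr
  have hker : DifferentiableAt ℂ (fun z => ∑' k : ℕ, gammaKernel z k) z₀ := by
    obtain ⟨N, hN⟩ := exists_nat_ge (20 * (‖z₀‖ + ρ) + 20)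
    obtain ⟨M, hM⟩ := (isCompact_closedBall z₀ ρ).exists_bound_of_continuousOn
      (f := fun z => gammaKernel z N) fun z hz =>
        (differentiableAt_gammaKernel (hre z hz) N).continuousAt.continuousWithinAt
    have htail : DifferentiableAt ℂ (fun z => ∑' m : ℕ, gammaKernel z (m + N)) z₀ := by
      refine (Complex.differentiableOn_tsum_of_summable_norm (U := Metric.ball z₀ ρ)
        (u := fun m : ℕ => (3 / 4 : ℝ) ^ m * M)
        ((summable_geometric_of_lt_one (by norm_num) (by norm_num)).mul_right _)
        (fun n z hz => ?_) Metric.isOpen_ball (fun n z hz => ?_)).differentiableAt hnhds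
      · exact (differentiableAt_gammaKernel (hre z (hsub z hz)) _).differentiableWithinAt
      · refine (norm_gammaKernel_add_le (by linarith [hnorm z (hsub z hz)]) n).trans ?_
        gcongr
        exact hM z (hsub z hz)
    have hsplit : (fun z => ∑' k : ℕ, gammaKernel z k) = fun z =>
        ∑ k ∈ Finset.range N, gammaKernel z k + ∑' m : ℕ, gammaKernel z (m + N) :=
      funext fun z => ((summable_gammaKernel z).sum_add_tsum_nat_add N).symm
    rw [hsplit]
    exact (DifferentiableAt.fun_sum fun k _ => differentiableAt_gammaKernel hz₀ k).add htail
  have hwz : (fun z => ∑' k : ℕ, wzTerm z k) = fun z =>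
      (8 : ℂ) ^ (-z) * (Complex.Gamma z)⁻¹ ^ 2 * ∑' k : ℕ, gammaKernel z k :=
    funext fun z => tsum_mul_left
  have h8 : DifferentiableAt ℂ (fun z : ℂ => (8 : ℂ) ^ (-z)) z₀ :=
    differentiableAt_id.neg.const_cpow (Or.inl (by norm_num))
  have hwzd : DifferentiableAt ℂ (fun z => ∑' k : ℕ, wzTerm z k) z₀ := by
    rw [hwz]
    exact (h8.mul ((Complex.differentiable_one_div_Gamma z₀).pow 2)).mul hker
  exact (hcos.const_mul _).add (hwzd.const_mul _)

theorem norm_wzTerm_succ_le {z : ℂ} (h0 : 0 < z.re) (h1 : z.re ≤ 1) (hy : 1 ≤ |z.im|) (k : ℕ) :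
    ‖wzTerm z (k + 1)‖ ≤ 17 / 20 * ‖wzTerm z k‖ := by
  have hk : (0 : ℝ) ≤ k := Nat.cast_nonneg k
  have hy2 : 1 ≤ z.im ^ 2 := by rw [← sq_abs]; nlinarith
  have hne : z + 1 / 2 + k ≠ 0 := fun h => by
    have := congrArg Complex.re h
    simp at this
    linarith
  have n1 : ‖z + 1 / 2 + k‖ ^ 2 = (z.re + 1 / 2 + k) ^ 2 + z.im ^ 2 := by
    rw [Complex.sq_norm, Complex.normSq_apply]; simp; ring
  have n2 : ‖z + 1 + k‖ ^ 2 = (z.re + 1 + k) ^ 2 + z.im ^ 2 := by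
    rw [Complex.sq_norm, Complex.normSq_apply]; simp; ring
  have n3 : ‖3 / 2 - z + k‖ ^ 2 = (3 / 2 - z.re + k) ^ 2 + z.im ^ 2 := by
    rw [Complex.sq_norm, Complex.normSq_apply]; simp; ring
  have l2 : ‖z + 1 / 2 + k‖ ≤ ‖z + 1 + k‖ := by
    refine le_of_sq_le_sq ?_ (norm_nonneg _)
    rw [n1, n2]; gcongr; norm_num
  have l3 : ‖z + 1 / 2 + k‖ ≤ 17 / 10 * ‖3 / 2 - z + k‖ := by
    refine le_of_sq_le_sq ?_ (by positivity)
    rw [mul_pow, n1, n3]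
    have u1 : (z.re + 1 / 2 + k) ^ 2 ≤ (3 / 2 + k) ^ 2 := by gcongr; linarith
    have u2 : (1 / 2 + k : ℝ) ^ 2 ≤ (3 / 2 - z.re + k) ^ 2 := by gcongr; linarith
    have u3 : (3 / 2 + k) ^ 2 + z.im ^ 2 ≤ (17 / 10) ^ 2 * ((1 / 2 + k) ^ 2 + z.im ^ 2) := by
      nlinarith only [hy2, hk, sq_nonneg (k - 1 / 2 : ℝ)]
    linarith only [u1, u2, u3]
  have l4 : ‖z + 1 / 2 + k‖ ^ 2 ≤ 17 / 10 * (‖z + 1 + k‖ * ‖3 / 2 - z + k‖) := by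
    calc _ = ‖z + 1 / 2 + k‖ * ‖z + 1 / 2 + k‖ := sq _
      _ ≤ ‖z + 1 + k‖ * (17 / 10 * ‖3 / 2 - z + k‖) := by gcongr
      _ = _ := by ring
  have hpos : 0 < ‖z + 1 + k‖ * ‖3 / 2 - z + k‖ := by
    have : 0 < ‖z + 1 / 2 + k‖ ^ 2 := by have := norm_pos_iff.2 hne; positivity
    linarith
  have key := congrArg (‖·‖) (gammaKernel_succ hne)
  simp only [norm_mul, norm_pow] at key
  norm_num at key
  have hker : ‖gammaKernel z (k + 1)‖ ≤ 17 / 20 * ‖gammaKernel z k‖ := by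
    refine le_of_mul_le_mul_right ?_ hpos
    calc _ = 1 / 2 * ‖z + 1 / 2 + k‖ ^ 2 * ‖gammaKernel z k‖ := by norm_num; linarith
      _ ≤ 1 / 2 * (17 / 10 * (‖z + 1 + k‖ * ‖3 / 2 - z + k‖)) * ‖gammaKernel z k‖ := by gcongr
      _ = _ := by ring
  unfold wzTerm
  rw [norm_mul, norm_mul _ (gammaKernel z k)]
  calc _ ≤ _ := mul_le_mul_of_nonneg_left hker (norm_nonneg _)
    _ = _ := by ring

theorem norm_wzTerm_le {z : ℂ} (h0 : 0 < z.re) (h1 : z.re ≤ 1) (hy : 1 ≤ |z.im|) (k : ℕ) :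
    ‖wzTerm z k‖ ≤ (17 / 20) ^ k * ‖wzTerm z 0‖ := by
  induction k with
  | zero => simp
  | succ k ih =>
    rw [pow_succ]
    linarith [norm_wzTerm_succ_le h0 h1 hy k]

theorem norm_wzTerm_zero_le {C : ℝ} (hC : ∀ w : ℂ, 0 ≤ w.re →
      ‖Complex.Gamma (w + 1 / 2) / Complex.Gamma (w + 1)‖ ≤ C) {z : ℂ}
    (h0 : 0 < z.re) (h1 : z.re ≤ 1) (hy : 1 ≤ |z.im|) :
    ‖wzTerm z 0‖ ≤ 4 * C ^ 3 * (|z.im| * Real.exp (Real.pi * |z.im|)) := by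
  have hπ : (Real.pi : ℂ) ≠ 0 := by exact_mod_cast Real.pi_ne_zero
  have hC0 : 0 ≤ C := (norm_nonneg _).trans (hC z h0.le)
  have hhalf : |z.im| ≤ ‖1 / 2 - z‖ := by
    simpa using Complex.abs_im_le_norm (1 / 2 - z)
  have hne : 1 / 2 - z ≠ 0 := norm_pos_iff.1 (by linarith)
  have hinv : (Complex.Gamma (3 / 2 - z))⁻¹
      = Complex.cos (Real.pi * z) * Complex.Gamma (z + 1 / 2) / Real.pi / (1 / 2 - z) := by
    have h := inv_Gamma_eq_mul_inv_Gamma_add_one (1 / 2 - z)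
    rw [inv_Gamma_half_sub z (by linarith), show 1 / 2 - z + 1 = 3 / 2 - z by ring] at h
    rw [h, mul_div_cancel_left₀ _ hne]
  have heq : wzTerm z 0 = (8 : ℂ) ^ (-z) * (z ^ 2 / (1 / 2 - z)) *
      (Complex.Gamma (z + 1 / 2) / Complex.Gamma (z + 1)) ^ 3 *
      (Complex.cos (Real.pi * z) / Real.pi) := by
    unfold wzTerm gammaKernel
    simp only [Nat.cast_zero, add_zero, pow_zero, one_mul]
    rw [inv_Gamma_eq_mul_inv_Gamma_add_one z, hinv]
    ring
  have a1 : ‖(8 : ℂ) ^ (-z)‖ ≤ 1 := by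
    have := Complex.norm_cpow_eq_rpow_re_of_pos (show (0 : ℝ) < 8 by norm_num) (-z)
    push_cast at this
    rw [this]
    exact Real.rpow_le_one_of_one_le_of_nonpos (by norm_num) (by simpa using h0.le)
  have a2 : ‖z ^ 2 / (1 / 2 - z)‖ ≤ 4 * |z.im| := by
    rw [norm_div, norm_pow, div_le_iff₀ (norm_pos_iff.2 hne)]
    have : ‖z‖ ≤ 2 * |z.im| := by
      have := Complex.norm_le_abs_re_add_abs_im z
      rw [abs_of_pos h0] at this
      linarith
    nlinarith [norm_nonneg z]
  have a3 := hC z h0.le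
  have a4 : ‖Complex.cos (Real.pi * z) / Real.pi‖ ≤ Real.exp (Real.pi * |z.im|) := by
    rw [norm_div, Complex.norm_real, Real.norm_of_nonneg Real.pi_pos.le]
    have := Complex.norm_cos_le_exp_abs_im (Real.pi * z)
    simp only [Complex.im_ofReal_mul, abs_mul, abs_of_pos Real.pi_pos] at this
    exact (div_le_self (norm_nonneg _) (by linarith [Real.pi_gt_three])).trans this
  rw [heq, norm_mul, norm_mul, norm_mul, norm_pow]
  calc _ ≤ 1 * (4 * |z.im|) * C ^ 3 * Real.exp (Real.pi * |z.im|) := by gcongr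
    _ = _ := by ring

theorem exists_norm_wzTotal_le : ∃ D : ℝ, ∀ z : ℂ, 0 < z.re → z.re ≤ 1 → 1 ≤ |z.im| →
    ‖wzTotal z‖ ≤ D * (|z.im| * Real.exp (Real.pi * |z.im|)) := by
  obtain ⟨C, hC0, hC⟩ := exists_norm_Gamma_add_half_le
  have hsum := summable_eighth_pow_mul 13
  have hgeo := summable_geometric_of_lt_one (r := (17 / 20 : ℝ)) (by norm_num) (by norm_num)
  refine ⟨C ^ 3 * ∑' n : ℕ, (1 / 8 : ℝ) ^ n * (6 * n + 13) +
    2 * ((∑' k : ℕ, (17 / 20 : ℝ) ^ k) * (4 * C ^ 3)), fun z h0 h1 hy => ?_⟩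
  set Y := |z.im| with hY
  set E := Real.exp (Real.pi * Y)
  have hz : ‖z‖ ≤ 1 + Y := by
    have := Complex.norm_le_abs_re_add_abs_im z
    rw [abs_of_pos h0] at this
    linarith
  have b1 : ‖∑' n : ℕ, cosTerm (z + n)‖ ≤
      C ^ 3 * (∑' n : ℕ, (1 / 8 : ℝ) ^ n * (6 * n + 13)) * (Y * E) := by
    have hs : HasSum (fun n : ℕ => C ^ 3 * ((1 / 8 : ℝ) ^ n * (6 * n + 13)) * (Y * E))
        (C ^ 3 * (∑' n : ℕ, (1 / 8 : ℝ) ^ n * (6 * n + 13)) * (Y * E)) :=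
      (hsum.hasSum.mul_left _).mul_right _
    refine tsum_of_norm_bounded hs fun n => (norm_cosTerm_add_le hC h0.le n).trans ?_
    have : 6 * n + 6 * ‖z‖ + 1 ≤ (6 * n + 13) * Y := by
      nlinarith [(Nat.cast_nonneg n : (0 : ℝ) ≤ n)]
    calc _ ≤ E * C ^ 3 * ((1 / 8) ^ n * ((6 * n + 13) * Y)) := by gcongr
      _ = _ := by ring
  have b2 : ‖∑' k : ℕ, wzTerm z k‖ ≤
      (∑' k : ℕ, (17 / 20 : ℝ) ^ k) * (4 * C ^ 3) * (Y * E) := by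
    have hs : HasSum (fun k : ℕ => (17 / 20 : ℝ) ^ k * (4 * C ^ 3 * (Y * E)))
        ((∑' k : ℕ, (17 / 20 : ℝ) ^ k) * (4 * C ^ 3 * (Y * E))) := hgeo.hasSum.mul_right _
    rw [mul_assoc]
    refine tsum_of_norm_bounded hs fun k => (norm_wzTerm_le h0 h1 hy k).trans ?_
    gcongr
    exact norm_wzTerm_zero_le hC h0 h1 hy
  have b3 : ‖(1 / (4 * Real.pi) : ℂ)‖ ≤ 1 := by
    rw [norm_div, norm_mul, norm_one, Complex.norm_real, Real.norm_of_nonneg Real.pi_pos.le,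
      RCLike.norm_ofNat]
    exact div_le_one_of_le₀ (by linarith [Real.pi_gt_three]) (by positivity)
  unfold wzTotal
  refine (norm_add_le _ _).trans ?_
  rw [norm_mul, norm_mul, RCLike.norm_ofNat, add_mul]
  refine add_le_add ((mul_le_of_le_one_left (norm_nonneg _) b3).trans b1) ?_
  linarith

theorem wzTotal_eq_const : ∃ c : ℂ, ∀ z : ℂ, -1 / 2 < z.re → wzTotal z = c := by
  let F : ℂ → ℂ := fun z => wzTotal (z + (⌈|z.re|⌉₊ + 1 : ℕ))
  have hF : ∀ (z : ℂ) (n : ℕ), -1 / 2 < z.re + n → F z = wzTotal (z + n) := by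
    intro z n hn
    have e1 := wzTotal_add_nat (z := z + n) (by simpa using hn) (⌈|z.re|⌉₊ + 1)
    have e2 := wzTotal_add_nat (z := z + (⌈|z.re|⌉₊ + 1 : ℕ))
      (by simp; linarith [Nat.le_ceil |z.re|, neg_abs_le z.re]) n
    rw [← e1, add_right_comm, e2]
  have hdiff : Differentiable ℂ F := by
    intro z₀
    obtain ⟨n, hn⟩ := exists_nat_gt (-z₀.re)
    have hd : DifferentiableAt ℂ (fun z => wzTotal (z + n)) z₀ :=
      (differentiableAt_wzTotal (z₀ := z₀ + n) (by simp; linarith)).comp z₀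
        (f := fun z : ℂ => z + n) (by fun_prop)
    refine hd.congr_of_eventuallyEq ?_
    filter_upwards [Complex.continuous_re.continuousAt.eventually_const_lt
      (show -(n : ℝ) < z₀.re by linarith)] with z hz
    exact hF z n (by linarith)
  have hper : ∀ z, F (z + 1) = F z := by
    intro z
    obtain ⟨n, hn⟩ := exists_nat_gt (-z.re)
    rw [hF (z + 1) n (by simp; linarith), hF z (n + 1) (by push_cast; linarith)]
    congr 1
    push_cast
    ring
  obtain ⟨D, hD⟩ := exists_norm_wzTotal_le
  refine ⟨F 0, fun z hz => ?_⟩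
  rw [← eq_const_of_periodic_of_growth hdiff hper (C := D) (fun w h0 h1 hy => ?_) z]
  · simpa using (hF z 0 (by simpa using hz)).symm
  · have := hF w 0 (by simp; linarith)
    rw [this]
    simpa using hD w h0 h1 hy

theorem hasSum_prod_half_pow :
    HasSum (fun k : ℕ => (1 / 2 : ℝ) ^ k * ∏ i ∈ Finset.range k, (2 * (i : ℝ) + 2) / (2 * i + 3))
      (Real.pi / 2) := by
  have hint : ∫ t in (0 : ℝ)..Real.pi, 2 * Real.sin t / (1 + Real.cos t ^ 2) = Real.pi := by
    have hd : ∀ t ∈ Set.uIcc 0 Real.pi, HasDerivAt (fun t => -2 * Real.arctan (Real.cos t))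
        (2 * Real.sin t / (1 + Real.cos t ^ 2)) t := fun t _ => by
      exact ((Real.hasDerivAt_cos t).arctan.const_mul (-2)).congr_deriv (by ring)
    rw [intervalIntegral.integral_eq_sub_of_hasDerivAt hd]
    · rw [Real.cos_pi, Real.cos_zero, Real.arctan_neg, Real.arctan_one]; ring
    · refine Continuous.intervalIntegrable ?_ _ _
      refine Continuous.div (by fun_prop) (by fun_prop) fun t => by positivity
  have hs : HasSum (fun k : ℕ => ∫ t in (0 : ℝ)..Real.pi, (1 / 2 : ℝ) ^ k * Real.sin t ^ (2 * k + 1))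
      (∫ t in (0 : ℝ)..Real.pi, 2 * Real.sin t / (1 + Real.cos t ^ 2)) := by
    refine intervalIntegral.hasSum_integral_of_dominated_convergence
      (fun k _ => (1 / 2 : ℝ) ^ k) (fun k => ?_) (fun k => ?_) ?_ ?_ ?_
    · exact (Continuous.aestronglyMeasurable (by fun_prop))
    · refine MeasureTheory.ae_of_all _ fun t _ => ?_
      rw [norm_mul, norm_pow, norm_pow, Real.norm_of_nonneg (by norm_num : (0 : ℝ) ≤ 1 / 2)]
      exact mul_le_of_le_one_right (by positivity)
        (pow_le_one₀ (norm_nonneg _) (Real.abs_sin_le_one t))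
    · exact MeasureTheory.ae_of_all _ fun t _ =>
        summable_geometric_of_lt_one (by norm_num) (by norm_num)
    · exact intervalIntegrable_const
    · refine MeasureTheory.ae_of_all _ fun t _ => ?_
      have hlt : Real.sin t ^ 2 / 2 < 1 := by linarith [Real.sin_sq_le_one t]
      have h := (hasSum_geometric_of_lt_one (by positivity) hlt).mul_left (Real.sin t)
      have hval : Real.sin t * (1 - Real.sin t ^ 2 / 2)⁻¹
          = 2 * Real.sin t / (1 + Real.cos t ^ 2) := by
        rw [show 1 + Real.cos t ^ 2 = 2 * (1 - Real.sin t ^ 2 / 2) by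
          rw [Real.sin_sq]; ring]
        have : 1 - Real.sin t ^ 2 / 2 ≠ 0 := by linarith
        field_simp
      rw [← hval]
      refine h.congr_fun fun k => ?_
      rw [pow_succ, pow_mul, ← mul_assoc, ← mul_pow, mul_comm]
      ring
  rw [hint] at hs
  refine (hs.div_const 2).congr_fun fun k => ?_
  rw [intervalIntegral.integral_const_mul, integral_sin_pow_odd]
  ring

theorem gammaKernel_half (k : ℕ) :
    gammaKernel (1 / 2) k = (((1 / 2 : ℝ) ^ k *
      ∏ i ∈ Finset.range k, (2 * (i : ℝ) + 2) / (2 * i + 3)) * (2 / √Real.pi) : ℝ) := by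
  induction k with
  | zero =>
    have h : Complex.Gamma (3 / 2) = ((√Real.pi / 2 : ℝ) : ℂ) := by
      have := Real.Gamma_add_one (s := 1 / 2) (by norm_num)
      rw [Real.Gamma_one_half_eq] at this
      rw [show (3 / 2 : ℂ) = ((1 / 2 + 1 : ℝ) : ℂ) by push_cast; norm_num, Complex.Gamma_ofReal,
        this]
      congr 1
      ring
    unfold gammaKernel
    norm_num
    rw [h]
    push_cast
    rw [inv_div]
  | succ k ih =>
    have hk1 : (k : ℂ) + 1 ≠ 0 := Nat.cast_add_one_ne_zero k
    have hk3 : 2 * (k : ℂ) + 3 ≠ 0 := by exact_mod_cast (by omega : 2 * k + 3 ≠ 0)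
    have h := gammaKernel_succ (z := 1 / 2) (k := k) (by
      rw [show (1 / 2 : ℂ) + 1 / 2 + k = k + 1 by ring]; exact hk1)
    rw [ih] at h
    refine mul_right_cancel₀ (mul_ne_zero (div_ne_zero hk3 two_ne_zero) hk1) ?_
    rw [show (2 * (k : ℂ) + 3) / 2 * (k + 1) = (1 / 2 + 1 + k) * (3 / 2 - 1 / 2 + k) by ring, h,
      Finset.prod_range_succ]
    push_cast
    field_simp
    ring

theorem wzTotal_half : wzTotal (1 / 2) = ((1 / (√2 * √Real.pi) : ℝ) : ℂ) := by
  have hcos : ∀ n : ℕ, cosTerm (1 / 2 + n) = 0 := fun n => by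
    have : Complex.cos (Real.pi * (1 / 2 + n)) = 0 :=
      Complex.cos_eq_zero_iff.2 ⟨n, by push_cast; ring⟩
    rw [cosTerm, this]
    ring
  have hwz : ∑' k : ℕ, wzTerm (1 / 2) k = (((8 : ℝ) ^ (-(1 / 2) : ℝ) * (√Real.pi)⁻¹ ^ 2 *
      (Real.pi / 2 * (2 / √Real.pi)) : ℝ) : ℂ) := by
    have h8 : (8 : ℂ) ^ (-(1 / 2) : ℂ) = (((8 : ℝ) ^ (-(1 / 2) : ℝ) : ℝ) : ℂ) := by
      rw [Complex.ofReal_cpow (by norm_num)]; push_cast; rfl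
    have hΓ : Complex.Gamma (1 / 2) = ((√Real.pi : ℝ) : ℂ) := by
      rw [← Real.Gamma_one_half_eq, ← Complex.Gamma_ofReal]; push_cast; rfl
    have := Complex.hasSum_ofReal.2 ((hasSum_prod_half_pow.mul_right (2 / √Real.pi)).mul_left
      ((8 : ℝ) ^ (-(1 / 2) : ℝ) * (√Real.pi)⁻¹ ^ 2))
    rw [← this.tsum_eq]
    refine tsum_congr fun k => ?_
    rw [wzTerm, gammaKernel_half, h8, hΓ]
    push_cast
    rfl
  unfold wzTotal
  simp only [hcos, tsum_zero, mul_zero, zero_add]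
  rw [hwz]
  have e8 : (8 : ℝ) ^ (-(1 / 2) : ℝ) = (2 * √2)⁻¹ := by
    rw [Real.rpow_neg (by norm_num), ← Real.sqrt_eq_rpow,
      show (8 : ℝ) = 2 ^ 2 * 2 by norm_num, Real.sqrt_mul (by norm_num), Real.sqrt_sq (by norm_num)]
  rw [e8, ← Complex.ofReal_ofNat, ← Complex.ofReal_mul]
  congr 1
  have hsq := Real.sq_sqrt Real.pi_pos.le
  have hp : √Real.pi ≠ 0 := (Real.sqrt_pos.2 Real.pi_pos).ne'
  rw [inv_pow, hsq]
  have := Real.pi_ne_zero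
  field_simp

theorem wzTotal_eq {z : ℂ} (hz : -1 / 2 < z.re) :
    wzTotal z = ((1 / (√2 * √Real.pi) : ℝ) : ℂ) := by
  obtain ⟨c, hc⟩ := wzTotal_eq_const
  rw [hc z hz, ← hc (1 / 2) (by norm_num), wzTotal_half]

theorem Gamma_add_natCast_eq_pochR {a : ℝ} (ha : 0 < a) (n : ℕ) :
    Real.Gamma (a + n) = pochR a n * Real.Gamma a := by
  induction n with
  | zero => simp [pochR]
  | succ n ih =>
    push_cast
    rw [← add_assoc, Real.Gamma_add_one (by positivity), ih, pochR, pochR,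
      Finset.prod_range_succ]
    ring

theorem gammaKernel_ofReal {x : ℝ} (hx1 : -1 / 2 < x) (hx2 : x < 1 / 2) (k : ℕ) :
    gammaKernel x k = ((Real.Gamma (x + 1 / 2) ^ 2 / (Real.Gamma (x + 1) * Real.Gamma (3 / 2 - x)) *
      ((2 : ℝ) ^ (-(k : ℝ)) * pochR (x + 1/2) k ^ 2 /
        (pochR (x + 1) k * pochR (3/2 - x) k)) : ℝ) : ℂ) := by
  have e1 : (x : ℂ) + 1 / 2 + k = ((x + 1 / 2 + k : ℝ) : ℂ) := by push_cast; rfl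
  have e2 : (x : ℂ) + 1 + k = ((x + 1 + k : ℝ) : ℂ) := by push_cast; rfl
  have e3 : 3 / 2 - (x : ℂ) + k = ((3 / 2 - x + k : ℝ) : ℂ) := by push_cast; rfl
  rw [gammaKernel, e1, e2, e3, Complex.Gamma_ofReal, Complex.Gamma_ofReal, Complex.Gamma_ofReal,
    Gamma_add_natCast_eq_pochR (by linarith), Gamma_add_natCast_eq_pochR (by linarith),
    Gamma_add_natCast_eq_pochR (by linarith), Real.rpow_neg (by norm_num), Real.rpow_natCast]
  push_cast
  rw [one_div, inv_pow]
  ring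

theorem wzTerm_ofReal {x : ℝ} (hx1 : -1 / 2 < x) (hx2 : x < 1 / 2) (k : ℕ) :
    wzTerm x k = ((8 : ℝ) ^ (-x) * x ^ 2 * (Real.Gamma (x + 1 / 2) / Real.Gamma (x + 1)) ^ 3 *
      (Real.cos (Real.pi * x) / Real.pi / (1 / 2 - x)) *
      ((2 : ℝ) ^ (-(k : ℝ)) * pochR (x + 1/2) k ^ 2 /
        (pochR (x + 1) k * pochR (3/2 - x) k)) : ℝ) := by
  have hx : 1 / 2 - x ≠ 0 := by linarith
  have hinv : (Real.Gamma (3 / 2 - x))⁻¹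
      = Real.cos (Real.pi * x) * Real.Gamma (x + 1 / 2) / Real.pi / (1 / 2 - x) := by
    have h := inv_Gamma_half_sub x (by simpa using hx1)
    rw [show (1 / 2 : ℂ) - x = ((1 / 2 - x : ℝ) : ℂ) by push_cast; rfl,
      show (x : ℂ) + 1 / 2 = ((x + 1 / 2 : ℝ) : ℂ) by push_cast; rfl, Complex.Gamma_ofReal,
      Complex.Gamma_ofReal] at h
    have h' : (Real.Gamma (1 / 2 - x))⁻¹
        = Real.cos (Real.pi * x) * Real.Gamma (x + 1 / 2) / Real.pi := by exact_mod_cast h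
    rw [← h', show 3 / 2 - x = 1 / 2 - x + 1 by ring, Real.Gamma_add_one hx, mul_inv]
    field_simp
  have h8 : (8 : ℂ) ^ (-(x : ℂ)) = (((8 : ℝ) ^ (-x) : ℝ) : ℂ) := by
    rw [Complex.ofReal_cpow (by norm_num)]; push_cast; rfl
  have e : (x : ℂ) + 1 = ((x + 1 : ℝ) : ℂ) := by push_cast; rfl
  rw [wzTerm, gammaKernel_ofReal hx1 hx2, inv_Gamma_eq_mul_inv_Gamma_add_one, h8, e,
    Complex.Gamma_ofReal, div_eq_mul_inv _ (_ * Real.Gamma (3 / 2 - x)), mul_inv, hinv]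
  push_cast
  ring

theorem cosTerm_ofReal (x : ℝ) (n : ℕ) :
    cosTerm (x + n) = (Real.cos (Real.pi * x) * √Real.pi ^ 3 *
      ((-1 : ℝ) ^ n * (2 : ℝ) ^ (-(3 : ℝ) * ((n : ℝ) + x)) *
        (pochG (1/2) ((n : ℝ) + x) / pochG 1 ((n : ℝ) + x)) ^ 3 *
        (6 * ((n : ℝ) + x) + 1)) : ℝ) := by
  have hp : √Real.pi ≠ 0 := (Real.sqrt_pos.2 Real.pi_pos).ne'
  have h8 : (8 : ℂ) ^ (-((x : ℂ) + n)) = (((2 : ℝ) ^ (-(3 : ℝ) * ((n : ℝ) + x)) : ℝ) : ℂ) := by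
    rw [show -(3 : ℝ) * ((n : ℝ) + x) = 3 * (-(x + n)) by ring, Real.rpow_mul (by norm_num),
      Complex.ofReal_cpow (by positivity)]
    norm_num
  have hcos : Complex.cos (Real.pi * (x + n)) = (((-1) ^ n * Real.cos (Real.pi * x) : ℝ) : ℂ) := by
    rw [← Real.cos_add_nat_mul_pi]
    push_cast
    ring_nf
  have hratio : pochG (1/2) ((n : ℝ) + x) / pochG 1 ((n : ℝ) + x)
      = Real.Gamma (x + n + 1 / 2) / Real.Gamma (x + n + 1) / √Real.pi := by
    rw [pochG, pochG, Real.Gamma_one, Real.Gamma_one_half_eq,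
      show 1 / 2 + ((n : ℝ) + x) = x + n + 1 / 2 by ring,
      show 1 + ((n : ℝ) + x) = x + n + 1 by ring]
    ring
  rw [hratio, cosTerm, h8, hcos,
    show (x : ℂ) + n + 1 / 2 = ((x + n + 1 / 2 : ℝ) : ℂ) by push_cast; rfl,
    show (x : ℂ) + n + 1 = ((x + n + 1 : ℝ) : ℂ) by push_cast; rfl, Complex.Gamma_ofReal,
    Complex.Gamma_ofReal, div_pow _ (√Real.pi)]
  have hp' : ((√Real.pi : ℝ) : ℂ) ≠ 0 := by exact_mod_cast hp
  push_cast
  field_simp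
  ring

/-- **Example of Section 2.** For `-1/2 < x < 1/2`,
`(√2/4) ∑_{n≥0} (-1)^n 2^{-3(n+x)} ((1/2)_{n+x}/(1)_{n+x})³ (6(n+x)+1)
 = 1/(π cos πx) + 4√2 · 8^{-x} · x²/(2x-1) · ((1/2)_x/(1)_x)³ ·
   ∑_{n≥0} 2^{-n} (x+1/2)_n² / ((x+1)_n (3/2-x)_n)`. -/
theorem example_identity (x : ℝ) (hx1 : -1/2 < x) (hx2 : x < 1/2) :
    Summable (fun n : ℕ =>
      (-1 : ℝ) ^ n * (2 : ℝ) ^ (-(3 : ℝ) * ((n : ℝ) + x)) *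
        (pochG (1/2) ((n : ℝ) + x) / pochG 1 ((n : ℝ) + x)) ^ 3 *
        (6 * ((n : ℝ) + x) + 1)) ∧
    Summable (fun n : ℕ =>
      (2 : ℝ) ^ (-(n : ℝ)) * pochR (x + 1/2) n ^ 2 /
        (pochR (x + 1) n * pochR (3/2 - x) n)) ∧
    (Real.sqrt 2 / 4) * (∑' n : ℕ,
        (-1 : ℝ) ^ n * (2 : ℝ) ^ (-(3 : ℝ) * ((n : ℝ) + x)) *
          (pochG (1/2) ((n : ℝ) + x) / pochG 1 ((n : ℝ) + x)) ^ 3 *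
          (6 * ((n : ℝ) + x) + 1))
      = 1 / (Real.pi * Real.cos (Real.pi * x)) +
        4 * Real.sqrt 2 * (8 : ℝ) ^ (-x) * (x ^ 2 / (2 * x - 1)) *
          (pochG (1/2) x / pochG 1 x) ^ 3 *
          ∑' n : ℕ,
            (2 : ℝ) ^ (-(n : ℝ)) * pochR (x + 1/2) n ^ 2 /
              (pochR (x + 1) n * pochR (3/2 - x) n) := by
  have hcos : 0 < Real.cos (Real.pi * x) :=
    Real.cos_pos_of_mem_Ioo ⟨by nlinarith [Real.pi_pos], by nlinarith [Real.pi_pos]⟩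
  have hp : 0 < √Real.pi := Real.sqrt_pos.2 Real.pi_pos
  have hS := summable_cosTerm (z := x) (by simp; linarith)
  simp only [cosTerm_ofReal] at hS
  have hS' := (summable_mul_left_iff (by positivity)).1 (Complex.summable_ofReal.1 hS)
  have hT := summable_gammaKernel x
  have hΓ : Real.Gamma (x + 1 / 2) ^ 2 / (Real.Gamma (x + 1) * Real.Gamma (3 / 2 - x)) ≠ 0 := by
    have h1 := Real.Gamma_pos_of_pos (show 0 < x + 1 / 2 by linarith)
    have h2 := Real.Gamma_pos_of_pos (show 0 < x + 1 by linarith)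
    have h3 := Real.Gamma_pos_of_pos (show 0 < 3 / 2 - x by linarith)
    positivity
  rw [funext (gammaKernel_ofReal hx1 hx2)] at hT
  have hT' := (summable_mul_left_iff hΓ).1 (Complex.summable_ofReal.1 hT)
  refine ⟨hS', hT', ?_⟩
  have h := wzTotal_eq (z := x) (by simpa using hx1)
  unfold wzTotal at h
  simp only [cosTerm_ofReal, wzTerm_ofReal hx1 hx2] at h
  rw [← Complex.ofReal_tsum, ← Complex.ofReal_tsum, tsum_mul_left, tsum_mul_left] at h
  set S := ∑' n : ℕ, (-1 : ℝ) ^ n * (2 : ℝ) ^ (-(3 : ℝ) * ((n : ℝ) + x)) *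
    (pochG (1/2) ((n : ℝ) + x) / pochG 1 ((n : ℝ) + x)) ^ 3 * (6 * ((n : ℝ) + x) + 1)
  set T := ∑' n : ℕ, (2 : ℝ) ^ (-(n : ℝ)) * pochR (x + 1/2) n ^ 2 /
    (pochR (x + 1) n * pochR (3/2 - x) n)
  have hratio : pochG (1/2) x / pochG 1 x
      = Real.Gamma (x + 1 / 2) / Real.Gamma (x + 1) / √Real.pi := by
    rw [pochG, pochG, Real.Gamma_one, Real.Gamma_one_half_eq, add_comm x, add_comm x]
    ring
  rw [hratio]
  set ρ := Real.Gamma (x + 1 / 2) / Real.Gamma (x + 1)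
  set E := (8 : ℝ) ^ (-x)
  set c := Real.cos (Real.pi * x)
  have hr : 1 / (4 * Real.pi) * (c * √Real.pi ^ 3 * S) +
      2 * (E * x ^ 2 * ρ ^ 3 * (c / Real.pi / (1 / 2 - x)) * T) = 1 / (√2 * √Real.pi) := by
    exact_mod_cast h
  have h2 : √2 ^ 2 = 2 := Real.sq_sqrt (by norm_num)
  have hπ : Real.pi = √Real.pi ^ 2 := (Real.sq_sqrt Real.pi_pos.le).symm
  have h2p : 0 < √2 := by positivity
  generalize √Real.pi = p at *
  generalize √2 = q at *
  generalize Real.pi = P at *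
  subst hπ
  have hx : 1 - 2 * x ≠ 0 := by linarith
  have hx' : 2 * x - 1 ≠ 0 := by linarith
  have hxx : 1 / (1 / 2 - x) = -(2 / (2 * x - 1)) := by
    rw [← neg_div, div_eq_div_iff (by linarith) hx']; ring
  have hc := hcos.ne'
  have hp' := hp.ne'
  have e : q / 4 * S = q / (p * c) * (1 / (4 * p ^ 2) * (c * p ^ 3 * S)) := by field_simp
  have e2 : 4 * q * E * (x ^ 2 / (2 * x - 1)) * (ρ / p) ^ 3 * T
      = -(q / (p * c) * (2 * (E * x ^ 2 * ρ ^ 3 * (c / p ^ 2 / (1 / 2 - x)) * T))) := by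
    rw [div_eq_mul_one_div (c / p ^ 2), hxx]
    field_simp
    ring
  have e3 : 1 / (p ^ 2 * c) = q / (p * c) * (1 / (q * p)) := by field_simp
  rw [e, e2, e3, ← hr]
  ring
end
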